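/- arXiv:2505.02897 — 5 statements merged into one kernel-verified Lean document; each statement's English description precedes it below -/
import Mathlib

section
/- Fix A > 0 and β > 0. For every compact interval I ⊂ ℝ, lim_{J→∞} sup_{h∈I} | √(2J) · e^{−4π√(A·J)} · D_vac^β(J, h) − ρ_c(h) | = 0; that is, √(2J)·e^{−4π√(AJ)}·D_vac^β(J,·) converges to ρ_c uniformly on compact intervals. -/
open MeasureTheory Filter Topology Real

noncomputable section

/-- The contour point `z = α_J + i t` with `α_J = 2π√(A/J)`. -/
def zline (A : ℝ) (J : ℤ) (t : ℝ) : ℂ :=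
  ((2 * π * Real.sqrt (A / (J : ℝ)) : ℝ) : ℂ) + (t : ℂ) * Complex.I

/-- The vacuum term `F_vac(β_L, J)` (principal branch square root). -/
def Fvac (A : ℝ) (βL : ℂ) (J : ℤ) : ℂ :=
  ∫ t in (-π)..π, (1 / (2 * π) : ℝ) •
    (Complex.exp (zline A J t * (J : ℂ)) *
      ((4 * (π : ℂ) ^ 2) / (zline A J t * (βL - zline A J t))) ^ ((1 : ℂ) / 2) *
      Complex.exp ((4 * (π : ℂ) ^ 2 * (A : ℂ)) / (βL - zline A J t) +
        (4 * (π : ℂ) ^ 2 * (A : ℂ)) / zline A J t) *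
      (1 - Complex.exp (-(4 * (π : ℂ) ^ 2) / (βL - zline A J t))) *
      (1 - Complex.exp (-(4 * (π : ℂ) ^ 2) / zline A J t)))

/-- The spin-`J` vacuum density `D_vac^β(J, h)`, the inverse Laplace transform of `F_vac`. -/
def Dvac (A β : ℝ) (J : ℤ) (h : ℝ) : ℂ :=
  ∫ s : ℝ, (1 / (2 * π) : ℝ) •
    (Fvac A ((β : ℂ) + (s : ℂ) * Complex.I) J *
      Complex.exp (((β : ℂ) + (s : ℂ) * Complex.I) * ((h : ℂ) - (A : ℂ))))

/-- The crossed-channel density `ρ_c(h)`; for `0 < A < 1` the second `cosh` is a `cos`. -/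
def rhoc (A : ℝ) (h : ℝ) : ℝ :=
  if h ≤ A then 0
  else Real.sqrt (2 / (h - A)) *
    (Real.cosh (4 * π * Real.sqrt (A * (h - A))) -
      (if 1 ≤ A then Real.cosh (4 * π * Real.sqrt ((A - 1) * (h - A)))
       else Real.cos (4 * π * Real.sqrt ((1 - A) * (h - A)))))


/-- `k(y) = (cosh (p y) - cosh (q y)) / y`. -/
def kfun (p q : ℂ) (y : ℝ) : ℂ := (Complex.cosh (p * y) - Complex.cosh (q * y)) / y

lemma kfun_zero (p q : ℂ) : kfun p q 0 = 0 := by simp [kfun]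

lemma kfun_continuous (p q : ℂ) : Continuous (kfun p q) := by
  set m : ℝ → ℂ := fun y => Complex.cosh (p * y) - Complex.cosh (q * y) with hm
  have hd : HasDerivAt m 0 0 := by
    have h1 : ∀ r : ℂ, HasDerivAt (fun y : ℝ => Complex.cosh (r * y)) 0 0 := by
      intro r
      have h2 : HasDerivAt (fun z : ℂ => Complex.cosh (r * z)) (Complex.sinh (r * ((0:ℝ):ℂ)) * (r * 1)) ((0:ℝ):ℂ) :=
        ((hasDerivAt_id _).const_mul r).ccosh
      have := h2.comp_ofReal
      simpa using this
    have h3 := (h1 p).sub (h1 q)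
    rw [sub_zero] at h3
    exact h3
  have hk : kfun p q = dslope m 0 := by
    funext y
    by_cases hy : y = 0
    · subst hy
      rw [dslope_same, hd.deriv, kfun_zero]
    · rw [dslope_of_ne _ hy, slope_def_module]
      simp only [kfun, hm, sub_zero, Complex.ofReal_zero, mul_zero, sub_self, Complex.real_smul, Complex.ofReal_inv]
      rw [div_eq_inv_mul]
  rw [hk, ← continuousOn_univ, continuousOn_dslope Filter.univ_mem]
  refine ⟨?_, hd.differentiableAt⟩
  apply Continuous.continuousOn
  rw [hm]; fun_prop

lemma gauss_cosh (w : ℂ) (hw : 0 < w.re) (p : ℂ) :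
    Integrable (fun y : ℝ => Complex.exp (-w * y ^ 2) * Complex.cosh (p * y)) ∧
    ∫ y : ℝ, Complex.exp (-w * y ^ 2) * Complex.cosh (p * y) =
      (π / w) ^ (1 / 2 : ℂ) * Complex.exp (p ^ 2 / (4 * w)) := by
  have hb : (-w).re < 0 := by simpa using hw
  have e : ∀ y : ℝ, Complex.exp (-w * y ^ 2) * Complex.cosh (p * y) =
      (1/2 : ℂ) * (Complex.exp (-w * y ^ 2 + p * y + 0) + Complex.exp (-w * y ^ 2 + (-p) * y + 0)) := by
    intro y
    rw [Complex.cosh, add_zero, add_zero, Complex.exp_add, Complex.exp_add, neg_mul p]; ring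
  have i1 := integrable_cexp_quadratic' hb p 0
  have i2 := integrable_cexp_quadratic' hb (-p) 0
  simp_rw [e]
  refine ⟨(i1.add i2).const_mul _, ?_⟩
  rw [integral_const_mul, integral_add i1 i2, integral_cexp_quadratic hb, integral_cexp_quadratic hb, neg_neg]
  have hw0 : w ≠ 0 := by rintro rfl; simp at hw
  have : (0:ℂ) - p ^ 2 / (4 * -w) = p ^ 2 / (4 * w) := by field_simp; ring
  rw [neg_sq, this]; ring

lemma laplace_k (w : ℂ) (hw : 0 < w.re) (p q : ℂ) :
    Integrable (fun x : ℝ => Complex.exp (-w * x) * kfun p q (√x)) ∧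
    ∫ x : ℝ, Complex.exp (-w * x) * kfun p q (√x) =
      (π / w) ^ (1 / 2 : ℂ) * (Complex.exp (p ^ 2 / (4 * w)) - Complex.exp (q ^ 2 / (4 * w))) := by
  obtain ⟨ip, ep⟩ := gauss_cosh w hw p
  obtain ⟨iq, eq⟩ := gauss_cosh w hw q
  set F : ℝ → ℂ := fun x : ℝ => Complex.exp (-w * x) * kfun p q (√x) with hF
  set H : ℝ → ℂ := fun y : ℝ => Complex.exp (-w * y ^ 2) * Complex.cosh (p * y) -
    Complex.exp (-w * y ^ 2) * Complex.cosh (q * y) with hH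
  have iH : Integrable H := ip.sub iq
  have key : ∀ y ∈ Set.Ioi (0:ℝ), ((2:ℝ) * y ^ ((2:ℝ) - 1)) • F (y ^ (2:ℝ)) = (2:ℂ) * H y := by
    intro y hy
    have hy' : (0:ℝ) < y := hy
    have : ((2:ℝ) - 1) = 1 := by norm_num
    rw [this, rpow_one, rpow_two, hF, hH]
    simp only [Real.sqrt_sq hy'.le, kfun, Complex.real_smul]
    have : (y:ℂ) ≠ 0 := by exact_mod_cast hy'.ne'
    push_cast
    field_simp
  have hsupp : Set.indicator (Set.Ioi (0:ℝ)) F = F := by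
    rw [Set.indicator_eq_self]
    intro x hx
    by_contra h
    apply hx
    have : x ≤ 0 := not_lt.mp h
    simp [hF, Real.sqrt_eq_zero_of_nonpos this, kfun_zero]
  have iF : IntegrableOn F (Set.Ioi 0) := by
    rw [← integrableOn_Ioi_comp_rpow_iff F (two_ne_zero (α := ℝ))]
    have : IntegrableOn (fun y => (2:ℂ) * H y) (Set.Ioi 0) := (iH.const_mul 2).integrableOn
    refine this.congr_fun (fun y hy => ?_) measurableSet_Ioi
    show (2:ℂ) * H y = _
    rw [← key y hy, abs_two]
  constructor
  · rw [← hsupp, integrable_indicator_iff measurableSet_Ioi]; exact iF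
  · rw [← hsupp, integral_indicator measurableSet_Ioi,
      ← integral_comp_rpow_Ioi_of_pos (two_pos (α := ℝ)),
      setIntegral_congr_fun measurableSet_Ioi key, integral_const_mul]
    have hev : ∀ y, H (-y) = H y := by
      intro y
      simp [hH]
    have h2 := integral_comp_neg_Ioi (0:ℝ) H
    simp_rw [hev] at h2
    have h3 := intervalIntegral.integral_Iic_add_Ioi (b := (0:ℝ)) iH.integrableOn iH.integrableOn
    rw [neg_zero] at h2
    rw [mul_sub, ← ep, ← eq, ← integral_sub ip iq]
    change _ = ∫ y, H y
    rw [← h3, ← h2]; ring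

lemma wline_re (γ s : ℝ) : ((γ : ℂ) + s * Complex.I).re = γ := by simp

lemma wline_ne (γ : ℝ) (hγ : 0 < γ) (s : ℝ) : ((γ : ℂ) + s * Complex.I) ≠ 0 := by
  intro h
  have := congrArg Complex.re h
  rw [wline_re] at this
  simp at this; linarith

lemma wline_slit (γ : ℝ) (hγ : 0 < γ) (s : ℝ) : ((γ : ℂ) + s * Complex.I) ∈ Complex.slitPlane := by
  left; rw [wline_re]; exact hγ

/-- The Bromwich integrand. -/
def Qfun (c d γ x : ℝ) (s : ℝ) : ℂ :=
  ((γ : ℂ) + s * Complex.I) ^ (-(1 / 2) : ℂ) * Complex.exp (c / ((γ : ℂ) + s * Complex.I)) *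
    (1 - Complex.exp (-d / ((γ : ℂ) + s * Complex.I))) * Complex.exp (((γ : ℂ) + s * Complex.I) * x)

lemma Qfun_continuous (c d γ x : ℝ) (hγ : 0 < γ) : Continuous (Qfun c d γ x) := by
  have h1 : Continuous fun s : ℝ => ((γ : ℂ) + s * Complex.I) := by fun_prop
  have h2 := wline_ne γ hγ
  have h3 : Continuous fun s : ℝ => ((γ : ℂ) + s * Complex.I) ^ (-(1 / 2) : ℂ) :=
    h1.cpow continuous_const (fun s => wline_slit γ hγ s)
  unfold Qfun
  refine ((h3.mul ?_).mul ?_).mul ?_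
  · exact Complex.continuous_exp.comp (continuous_const.div h1 h2)
  · exact continuous_const.sub (Complex.continuous_exp.comp (continuous_const.div h1 h2))
  · fun_prop

lemma norm_one_sub_exp_le (v : ℂ) : ‖1 - Complex.exp v‖ ≤ ‖v‖ * Real.exp ‖v‖ := by
  have := Complex.norm_exp_sub_sum_le_norm_mul_exp v 1
  simpa [norm_sub_rev] using this

lemma Qfun_integrable (c d γ x : ℝ) (hγ : 0 < γ) : Integrable (Qfun c d γ x) := by
  have hi : Integrable (fun s : ℝ => (1 + ‖s‖ ^ 2) ^ (-(3/2 : ℝ) / 2)) :=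
    integrable_rpow_neg_one_add_norm_sq (by norm_num)
  set κ : ℝ := min 1 (γ ^ 2) with hκ
  have hκ0 : 0 < κ := lt_min one_pos (by positivity)
  refine (hi.const_mul (Real.exp (|c| / γ) * (|d| * Real.exp (|d| / γ)) * Real.exp (γ * x) * κ ^ (-(3/2 : ℝ) / 2))).mono'
    (Qfun_continuous c d γ x hγ).aestronglyMeasurable (Eventually.of_forall fun s => ?_)
  set w : ℂ := (γ : ℂ) + s * Complex.I with hw
  have hwre : w.re = γ := wline_re γ s
  have hwim : w.im = s := by simp [hw]
  have hwγ : γ ≤ ‖w‖ := by rw [← hwre]; exact Complex.re_le_norm w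
  have hw0 : 0 < ‖w‖ := hγ.trans_le hwγ
  have hw2 : κ * (1 + ‖s‖ ^ 2) ≤ ‖w‖ ^ 2 := by
    rw [Complex.sq_norm, Complex.normSq_apply, hwre, hwim, Real.norm_eq_abs, sq_abs]
    nlinarith [min_le_left 1 (γ ^ 2), min_le_right 1 (γ ^ 2), sq_nonneg s]
  have b1 : ‖w ^ (-(1 / 2) : ℂ)‖ = ‖w‖ ^ (-(1/2) : ℝ) := by
    have := Complex.norm_cpow_real w (-(1/2))
    push_cast at this; exact this
  have b2 : ‖Complex.exp (c / w)‖ ≤ Real.exp (|c| / γ) := by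
    refine (Complex.norm_exp_le_exp_norm _).trans (Real.exp_le_exp.mpr ?_)
    rw [norm_div, Complex.norm_real, Real.norm_eq_abs]
    gcongr
  have b3 : ‖1 - Complex.exp (-d / w)‖ ≤ (|d| * Real.exp (|d| / γ)) * ‖w‖⁻¹ := by
    refine (norm_one_sub_exp_le _).trans ?_
    rw [norm_div, norm_neg, Complex.norm_real, Real.norm_eq_abs]
    have : |d| / ‖w‖ ≤ |d| / γ := by gcongr
    calc |d| / ‖w‖ * Real.exp (|d| / ‖w‖) ≤ |d| / ‖w‖ * Real.exp (|d| / γ) := by gcongr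
      _ = _ := by ring
  have b4 : ‖Complex.exp (w * x)‖ = Real.exp (γ * x) := by
    rw [Complex.norm_exp]; congr 1; simp [hw]
  have b5 : ‖w‖ ^ (-(1/2) : ℝ) * ‖w‖⁻¹ ≤ κ ^ (-(3/2 : ℝ) / 2) * (1 + ‖s‖ ^ 2) ^ (-(3/2 : ℝ) / 2) := by
    have e1 : ‖w‖ ^ (-(1/2) : ℝ) * ‖w‖⁻¹ = (‖w‖ ^ 2) ^ (-(3/2 : ℝ) / 2) := by
      rw [← Real.rpow_neg_one, ← Real.rpow_add hw0, ← Real.rpow_two, ← Real.rpow_mul hw0.le]; norm_num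
    rw [e1, ← Real.mul_rpow hκ0.le (by positivity)]
    exact Real.rpow_le_rpow_of_nonpos (by positivity) hw2 (by norm_num)
  change ‖w ^ (-(1 / 2) : ℂ) * Complex.exp (c / w) * (1 - Complex.exp (-d / w)) * Complex.exp (w * x)‖ ≤ _
  rw [norm_mul, norm_mul, norm_mul, b1, b4]
  calc ‖w‖ ^ (-(1/2) : ℝ) * ‖Complex.exp (c / w)‖ * ‖1 - Complex.exp (-d / w)‖ * Real.exp (γ * x)
      ≤ ‖w‖ ^ (-(1/2) : ℝ) * Real.exp (|c| / γ) * ((|d| * Real.exp (|d| / γ)) * ‖w‖⁻¹) * Real.exp (γ * x) := by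
        gcongr
    _ = Real.exp (|c| / γ) * (|d| * Real.exp (|d| / γ)) * Real.exp (γ * x) * (‖w‖ ^ (-(1/2) : ℝ) * ‖w‖⁻¹) := by ring
    _ ≤ Real.exp (|c| / γ) * (|d| * Real.exp (|d| / γ)) * Real.exp (γ * x) *
        (κ ^ (-(3/2 : ℝ) / 2) * (1 + ‖s‖ ^ 2) ^ (-(3/2 : ℝ) / 2)) := by gcongr
    _ = _ := by ring

lemma arg_abs_lt (w : ℂ) (hw : 0 < w.re) : |w.arg| < π / 2 :=
  Complex.abs_arg_lt_pi_div_two_iff.mpr (Or.inl hw)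

lemma pi_div_cpow (w : ℂ) (hw : 0 < w.re) :
    ((π : ℂ) / w) ^ (1 / 2 : ℂ) = (√π : ℂ) * w ^ (-(1 / 2) : ℂ) := by
  have hw0 : w ≠ 0 := by rintro rfl; simp at hw
  have hwi : w.arg ≠ π := by
    have := abs_lt.mp (arg_abs_lt w hw); intro h; linarith [pi_pos]
  have : (π : ℂ) / w = ((π:ℝ) : ℂ) * w⁻¹ := by rw [div_eq_mul_inv]
  rw [this, Complex.cpow_def_of_ne_zero (mul_ne_zero (by exact_mod_cast pi_ne_zero) (inv_ne_zero hw0)),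
    Complex.log_ofReal_mul pi_pos (inv_ne_zero hw0), Complex.log_inv _ hwi,
    Complex.cpow_def_of_ne_zero hw0, add_mul, Complex.exp_add]
  congr 1
  · rw [Real.sqrt_eq_rpow, Real.rpow_def_of_pos pi_pos]; push_cast; rfl
  · congr 1; ring

lemma Qfun_integral (c d γ x : ℝ) (hγ : 0 < γ) (p q : ℂ) (hp : p ^ 2 = 4 * c) (hq : q ^ 2 = 4 * (c - d)) :
    ∫ s, Qfun c d γ x s = 2 * √π * kfun p q (√x) := by
  set f : ℝ → ℂ := fun x => Complex.exp (-γ * x) * kfun p q (√x) with hf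
  have hfc : Continuous f := by
    have := (kfun_continuous p q).comp Real.continuous_sqrt
    exact (by fun_prop : Continuous fun x : ℝ => Complex.exp (-γ * x)).mul this
  have hfi : Integrable f := (laplace_k γ (by simpa using hγ) p q).1
  have hQ : ∀ (y s : ℝ), Qfun c d γ y s = ((γ : ℂ) + s * Complex.I) ^ (-(1 / 2) : ℂ) *
      (Complex.exp (p ^ 2 / (4 * ((γ : ℂ) + s * Complex.I))) - Complex.exp (q ^ 2 / (4 * ((γ : ℂ) + s * Complex.I)))) *
       Complex.exp (((γ : ℂ) + s * Complex.I) * y) := by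
    intro y s
    have h0 := wline_ne γ hγ s
    have e1 : p ^ 2 / (4 * ((γ : ℂ) + s * Complex.I)) = c / ((γ : ℂ) + s * Complex.I) := by
      rw [hp]; field_simp
    have e2 : q ^ 2 / (4 * ((γ : ℂ) + s * Complex.I)) = c / ((γ : ℂ) + s * Complex.I) + -d / ((γ : ℂ) + s * Complex.I) := by
      rw [hq]; field_simp; ring
    rw [e1, e2, Complex.exp_add, Qfun]; ring
  have hFT : FourierTransform.fourier f = fun ξ : ℝ => (√π : ℂ) * Qfun c d γ 0 (2 * π * ξ) := by
    funext ξ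
    rw [Real.fourier_real_eq_integral_exp_smul]
    have hre : 0 < ((γ : ℂ) + (2 * π * ξ : ℝ) * Complex.I).re := by rw [wline_re]; exact hγ
    have h1 := (laplace_k ((γ : ℂ) + (2 * π * ξ : ℝ) * Complex.I) hre p q).2
    rw [hQ, Complex.ofReal_zero, mul_zero, Complex.exp_zero, mul_one, ← mul_assoc, ← pi_div_cpow _ hre, ← h1]
    congr 1
    funext v
    rw [hf, smul_eq_mul, ← mul_assoc, ← Complex.exp_add]
    congr 2
    push_cast; ring
  have hFTi : Integrable (FourierTransform.fourier f) := by
    rw [hFT]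
    exact ((Qfun_integrable c d γ 0 hγ).comp_mul_left' (by positivity)).const_mul _
  have hinv := hfi.fourierInv_fourier_eq hFTi (v := x) hfc.continuousAt
  rw [hFT, Real.fourierInv_eq'] at hinv
  have h5 : ∀ ξ : ℝ, Complex.exp (((2 * π * inner ℝ ξ x : ℝ) : ℂ) * Complex.I) • ((√π : ℂ) * Qfun c d γ 0 (2 * π * ξ)) =
      ((√π : ℂ) * Complex.exp (-γ * x)) * Qfun c d γ x (2 * π * ξ) := by
    intro ξ
    have : Qfun c d γ x (2 * π * ξ) = Qfun c d γ 0 (2 * π * ξ) * (Complex.exp (γ * x) * Complex.exp (((2 * π * inner ℝ ξ x : ℝ) : ℂ) * Complex.I)) := by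
      rw [hQ, hQ, Complex.ofReal_zero, mul_zero, Complex.exp_zero, mul_one, ← Complex.exp_add]
      congr 2
      simp; ring
    rw [this, smul_eq_mul]
    have e : Complex.exp (-γ * x) * Complex.exp (γ * x) = 1 := by
      rw [← Complex.exp_add]; simp
    linear_combination (-(√π : ℂ) * Qfun c d γ 0 (2 * π * ξ) * Complex.exp (((2 * π * inner ℝ ξ x : ℝ) : ℂ) * Complex.I)) * e
  simp_rw [h5] at hinv
  rw [integral_const_mul, Measure.integral_comp_mul_left (fun s => Qfun c d γ x s), hf] at hinv
  rw [abs_of_pos (by positivity), Complex.real_smul] at hinv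
  have he : Complex.exp (-γ * x) ≠ 0 := Complex.exp_ne_zero _
  have hs : (√π : ℂ) ^ 2 = π := by
    exact_mod_cast congrArg (fun r : ℝ => (r : ℂ)) (Real.sq_sqrt pi_pos.le)
  have hs0 : (√π : ℂ) ≠ 0 := by exact_mod_cast (Real.sqrt_pos.mpr pi_pos).ne'
  have hpi : (π : ℂ) ≠ 0 := by exact_mod_cast pi_ne_zero
  have h6 : (√π : ℂ) * ((2 * π : ℝ) : ℂ)⁻¹ * ∫ s, Qfun c d γ x s = kfun p q (√x) := by
    apply mul_left_cancel₀ he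
    refine Eq.trans ?_ hinv
    push_cast; ring
  rw [← h6]
  push_cast
  field_simp
  rw [hs]


/-- Rescaled saddle integrand. -/
def Sfun (c d a x u : ℝ) : ℂ :=
  Set.indicator (Set.Ioc (-π) π) (fun _ => (1:ℂ)) (a ^ 3 * u) *
   ((1 + (a * u : ℝ) * Complex.I) ^ (-(1 / 2) : ℂ) *
    (1 - Complex.exp (-d / ((a : ℂ) ^ 2 * (1 + (a * u : ℝ) * Complex.I)))) *
    Complex.exp ((a : ℂ) ^ 2 * (1 + (a * u : ℝ) * Complex.I) * x) *
    Complex.exp (-c * u ^ 2 / (1 + (a * u : ℝ) * Complex.I)))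

lemma exp_bound (c : ℝ) (hc : 0 < c) (a u : ℝ) (ha : 0 < a) (ha1 : a ≤ 1) (h : |a ^ 3 * u| ≤ π) :
    Real.exp (-c * u ^ 2 / (1 + a ^ 2 * u ^ 2)) ≤ (2 + 48 * (1 + π ^ 2) / c ^ 3) * (1 + u ^ 2)⁻¹ := by
  rcases le_total (u ^ 2) 1 with hu | hu
  · have h1 : Real.exp (-c * u ^ 2 / (1 + a ^ 2 * u ^ 2)) ≤ 1 := by
      rw [Real.exp_le_one_iff]
      apply div_nonpos_of_nonpos_of_nonneg
      · nlinarith [sq_nonneg u]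
      · positivity
    refine h1.trans ?_
    rw [← div_eq_mul_inv, le_div_iff₀ (by positivity)]
    have : 0 ≤ 48 * (1 + π ^ 2) / c ^ 3 := by positivity
    linarith
  · set y := c * u ^ 2 / (1 + a ^ 2 * u ^ 2) with hy
    have hu0 : 0 < u ^ 2 := by linarith
    have hy0 : 0 < y := by positivity
    have e1 : -c * u ^ 2 / (1 + a ^ 2 * u ^ 2) = -y := by rw [hy]; ring
    have h2 : y ^ 3 / 6 ≤ Real.exp y := by
      have := Real.pow_div_factorial_le_exp y hy0.le 3
      norm_num [Nat.factorial] at this; exact this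
    have h3 : Real.exp (-y) ≤ 6 / y ^ 3 := by
      rw [Real.exp_neg, ← inv_div]
      exact inv_anti₀ (by positivity) h2
    have h4 : a ^ 6 * u ^ 2 ≤ π ^ 2 := by
      have := sq_le_sq' (by linarith [neg_abs_le (a^3*u), abs_nonneg (a^3*u)]) h
      rw [sq_abs] at this
      nlinarith
    have h5 : (1 + a ^ 2 * u ^ 2) ^ 3 ≤ 4 * (1 + π ^ 2) * u ^ 4 := by
      have hb : 0 ≤ a ^ 2 * u ^ 2 := by positivity
      have g1 : (1 + a ^ 2 * u ^ 2) ^ 3 ≤ 4 * (1 + (a ^ 2 * u ^ 2) ^ 3) := by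
        set b := a ^ 2 * u ^ 2
        nlinarith [mul_nonneg (by linarith : 0 ≤ 1 + b) (sq_nonneg (1 - b))]
      have g2 : (a ^ 2 * u ^ 2) ^ 3 ≤ π ^ 2 * u ^ 4 := by
        have : (a ^ 2 * u ^ 2) ^ 3 = (a ^ 6 * u ^ 2) * u ^ 4 := by ring
        rw [this]; gcongr
      have g3 : 1 ≤ u ^ 4 := by nlinarith
      nlinarith
    rw [e1]
    refine h3.trans ?_
    have h6 : 6 / y ^ 3 = 6 * (1 + a ^ 2 * u ^ 2) ^ 3 / (c ^ 3 * (u ^ 2) ^ 3) := by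
      rw [hy]; field_simp
    have h7 : 6 / y ^ 3 ≤ 24 * (1 + π ^ 2) / c ^ 3 * (u ^ 2)⁻¹ := by
      rw [h6, div_le_iff₀ (by positivity)]
      have : 24 * (1 + π ^ 2) / c ^ 3 * (u ^ 2)⁻¹ * (c ^ 3 * (u ^ 2) ^ 3) = 6 * (4 * (1 + π ^ 2) * u ^ 4) := by
        field_simp; ring
      rw [this]; linarith
    refine h7.trans ?_
    have h8 : (u ^ 2)⁻¹ ≤ 2 * (1 + u ^ 2)⁻¹ := by
      rw [← div_eq_mul_inv, inv_eq_one_div, div_le_div_iff₀ hu0 (by positivity)]; linarith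
    calc 24 * (1 + π ^ 2) / c ^ 3 * (u ^ 2)⁻¹ ≤ 24 * (1 + π ^ 2) / c ^ 3 * (2 * (1 + u ^ 2)⁻¹) := by gcongr
      _ ≤ _ := by
        have : 0 < (1 + u ^ 2)⁻¹ := by positivity
        have e : 24 * (1 + π ^ 2) / c ^ 3 * (2 * (1 + u ^ 2)⁻¹) = (48 * (1 + π ^ 2) / c ^ 3) * (1 + u ^ 2)⁻¹ := by ring
        rw [e]; nlinarith

lemma v_inv_re (r : ℝ) (k : ℝ) : ((k : ℂ) / (1 + (r : ℝ) * Complex.I)).re = k / (1 + r ^ 2) := by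
  rw [Complex.div_re]
  simp [Complex.normSq_apply, sq]

lemma v_norm (r : ℝ) : 1 ≤ ‖(1 + (r : ℂ) * Complex.I)‖ := by
  have := Complex.re_le_norm (1 + (r : ℂ) * Complex.I)
  simpa using this

lemma v_ne (r : ℝ) : (1 + (r : ℂ) * Complex.I) ≠ 0 := by
  intro h
  have := v_norm r
  rw [h] at this; norm_num at this

lemma v_slit (r : ℝ) : (1 + (r : ℂ) * Complex.I) ∈ Complex.slitPlane := by
  left; simp

lemma norm_expd (d a r : ℝ) (ha : 0 < a) :
    ‖Complex.exp (-d / ((a : ℂ) ^ 2 * (1 + (r : ℝ) * Complex.I)))‖ = Real.exp (-(d / a ^ 2) / (1 + r ^ 2)) := by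
  rw [Complex.norm_exp]
  have : -(d:ℂ) / ((a : ℂ) ^ 2 * (1 + (r : ℝ) * Complex.I)) = ((-(d / a ^ 2) : ℝ) : ℂ) / (1 + (r : ℝ) * Complex.I) := by
    have := v_ne r
    have ha' : (a:ℂ) ≠ 0 := by exact_mod_cast ha.ne'
    push_cast; field_simp
  rw [this, v_inv_re]

lemma norm_expc (c u r : ℝ) :
    ‖Complex.exp (-c * u ^ 2 / (1 + (r : ℝ) * Complex.I))‖ = Real.exp (-c * u ^ 2 / (1 + r ^ 2)) := by
  rw [Complex.norm_exp]
  have : -(c:ℂ) * u ^ 2 = ((-c * u ^ 2 : ℝ) : ℂ) := by push_cast; ring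
  rw [this, v_inv_re]

lemma Sfun_measurable (c d a x : ℝ) (ha : 0 < a) : AEStronglyMeasurable (Sfun c d a x) := by
  have hv : Continuous fun u : ℝ => (1 + ((a * u : ℝ):ℂ) * Complex.I) := by fun_prop
  have ha' : (a:ℂ) ≠ 0 := by exact_mod_cast ha.ne'
  unfold Sfun
  apply AEStronglyMeasurable.mul
  · apply Measurable.aestronglyMeasurable
    have : Measurable (Set.indicator (Set.Ioc (-π) π) (fun _ => (1:ℂ))) :=
      measurable_const.indicator measurableSet_Ioc
    exact this.comp (measurable_const_mul _)
  · apply Continuous.aestronglyMeasurable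
    refine ((Continuous.mul ?_ ?_).mul ?_).mul ?_
    · exact hv.cpow continuous_const (fun s => v_slit _)
    · exact continuous_const.sub (Complex.continuous_exp.comp
        (continuous_const.div (continuous_const.mul hv) (fun u => mul_ne_zero (pow_ne_zero 2 ha') (v_ne _))))
    · fun_prop
    · exact Complex.continuous_exp.comp (Continuous.div (by fun_prop) hv (fun u => v_ne _))

lemma Sfun_norm (c d a x u R : ℝ) (hc : 0 < c) (hd : 0 < d) (ha : 0 < a) (ha1 : a ≤ 1) (hx : |x| ≤ R) :
    ‖Sfun c d a x u‖ ≤ 2 * Real.exp R * ((2 + 48 * (1 + π ^ 2) / c ^ 3) * (1 + u ^ 2)⁻¹) := by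
  have hpos : 0 ≤ 2 * Real.exp R * ((2 + 48 * (1 + π ^ 2) / c ^ 3) * (1 + u ^ 2)⁻¹) := by positivity
  unfold Sfun
  by_cases hu : a ^ 3 * u ∈ Set.Ioc (-π) π
  · rw [Set.indicator_of_mem hu, one_mul, norm_mul, norm_mul, norm_mul, norm_expc]
    have hab : |a ^ 3 * u| ≤ π := abs_le.mpr ⟨hu.1.le, hu.2⟩
    have b1 : ‖(1 + ((a * u : ℝ):ℂ) * Complex.I) ^ (-(1 / 2) : ℂ)‖ ≤ 1 := by
      have := Complex.norm_cpow_real (1 + ((a * u : ℝ):ℂ) * Complex.I) (-(1/2))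
      rw [show (-(1 / 2) : ℂ) = ((-(1/2) : ℝ) : ℂ) by push_cast; rfl, this]
      exact Real.rpow_le_one_of_one_le_of_nonpos (v_norm _) (by norm_num)
    have b2 : ‖1 - Complex.exp (-d / ((a : ℂ) ^ 2 * (1 + (a * u : ℝ) * Complex.I)))‖ ≤ 2 := by
      refine (norm_sub_le _ _).trans ?_
      rw [norm_expd _ _ _ ha, norm_one]
      have : Real.exp (-(d / a ^ 2) / (1 + (a * u) ^ 2)) ≤ 1 := by
        rw [Real.exp_le_one_iff]
        apply div_nonpos_of_nonpos_of_nonneg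
        · have : 0 < d / a ^ 2 := by positivity
          linarith
        · positivity
      linarith
    have b3 : ‖Complex.exp ((a : ℂ) ^ 2 * (1 + (a * u : ℝ) * Complex.I) * x)‖ ≤ Real.exp R := by
      rw [Complex.norm_exp]
      apply Real.exp_le_exp.mpr
      have : ((a : ℂ) ^ 2 * (1 + (a * u : ℝ) * Complex.I) * x).re = a ^ 2 * x := by
        have : (a : ℂ) ^ 2 * (1 + (a * u : ℝ) * Complex.I) * x = ((a^2 * x : ℝ) : ℂ) + ((a^2 * (a * u) * x : ℝ) : ℂ) * Complex.I := by
          push_cast; ring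
        rw [this, wline_re]
      rw [this]
      have hx' := le_abs_self x
      have hxx := abs_nonneg x
      have : a ^ 2 ≤ 1 := by nlinarith
      nlinarith [sq_nonneg a]
    have b4 := exp_bound c hc a u ha ha1 hab
    rw [← mul_pow] at b4
    calc _ ≤ 1 * 2 * Real.exp R * ((2 + 48 * (1 + π ^ 2) / c ^ 3) * (1 + u ^ 2)⁻¹) := by gcongr
      _ = _ := by ring
  · rw [Set.indicator_of_notMem hu, zero_mul, norm_zero]; exact hpos

lemma Sfun_tendsto {ι : Type*} (l : Filter ι) [l.IsCountablyGenerated] (c d R : ℝ) (hc : 0 < c) (hd : 0 < d)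
    (a X : ι → ℝ) (ha : Tendsto a l (𝓝[>] 0)) (hX : ∀ᶠ i in l, |X i| ≤ R) :
    Tendsto (fun i => ∫ u, Sfun c d (a i) (X i) u) l (𝓝 ((√(π / c) : ℝ) : ℂ)) := by
  have ha0 : ∀ᶠ i in l, 0 < a i := ha.eventually self_mem_nhdsWithin
  have hat : Tendsto a l (𝓝 0) := ha.mono_right nhdsWithin_le_nhds
  have ha1 : ∀ᶠ i in l, a i ≤ 1 := hat.eventually (eventually_le_nhds one_pos)
  have hlim : ((√(π / c) : ℝ) : ℂ) = ∫ u : ℝ, ((Real.exp (-c * u ^ 2) : ℝ) : ℂ) := by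
    rw [integral_complex_ofReal, integral_gaussian]
  rw [hlim]
  refine tendsto_integral_filter_of_dominated_convergence
    (fun u => 2 * Real.exp R * ((2 + 48 * (1 + π ^ 2) / c ^ 3) * (1 + u ^ 2)⁻¹)) ?_ ?_ ?_ ?_
  · filter_upwards [ha0] with i hi
    exact Sfun_measurable c d _ _ hi
  · filter_upwards [ha0, ha1, hX] with i h0 h1 h2
    exact Eventually.of_forall fun u => Sfun_norm c d _ _ u R hc hd h0 h1 h2
  · exact (integrable_inv_one_add_sq.const_mul _).const_mul _
  · refine Eventually.of_forall fun u => ?_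
    have hau : Tendsto (fun i => a i * u) l (𝓝 0) := by simpa using hat.mul_const u
    have hv : Tendsto (fun i => (1 + ((a i * u : ℝ):ℂ) * Complex.I)) l (𝓝 1) := by
      have := (Complex.continuous_ofReal.tendsto 0).comp hau
      simpa using (this.mul_const Complex.I).const_add 1
    have t0 : Tendsto (fun i => Set.indicator (Set.Ioc (-π) π) (fun _ => (1:ℂ)) (a i ^ 3 * u)) l (𝓝 1) := by
      have h3 : Tendsto (fun i => a i ^ 3 * u) l (𝓝 0) := by simpa using (hat.pow 3).mul_const u
      have h4 : ∀ᶠ i in l, a i ^ 3 * u ∈ Set.Ioc (-π) π :=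
        h3.eventually (Ioc_mem_nhds (by linarith [pi_pos]) pi_pos)
      refine tendsto_const_nhds.congr' ?_
      filter_upwards [h4] with i hi
      rw [Set.indicator_of_mem hi]
    have t1 : Tendsto (fun i => (1 + ((a i * u : ℝ):ℂ) * Complex.I) ^ (-(1 / 2) : ℂ)) l (𝓝 1) := by
      have := hv.cpow (tendsto_const_nhds (x := (-(1/2) : ℂ))) (by simp)
      simpa using this
    have t2 : Tendsto (fun i => Complex.exp (-d / ((a i : ℂ) ^ 2 * (1 + (a i * u : ℝ) * Complex.I)))) l (𝓝 0) := by
      rw [tendsto_zero_iff_norm_tendsto_zero]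
      have : Tendsto (fun i => Real.exp (-(d / a i ^ 2) / (1 + (a i * u) ^ 2))) l (𝓝 0) := by
        have g1 : Tendsto (fun i => a i ^ 2 * (1 + (a i * u) ^ 2)) l (𝓝[>] 0) := by
          apply tendsto_nhdsWithin_of_tendsto_nhds_of_eventually_within
          · simpa using (hat.pow 2).mul ((hau.pow 2).const_add 1)
          · filter_upwards [ha0] with i hi
            rw [Set.mem_Ioi]
            positivity
        have g2 := (tendsto_inv_nhdsGT_zero.comp g1).const_mul_atTop hd
        refine (Real.tendsto_exp_neg_atTop_nhds_zero.comp g2).congr' ?_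
        filter_upwards [ha0] with i hi
        simp only [Function.comp]
        congr 1
        field_simp
      refine this.congr' ?_
      filter_upwards [ha0] with i hi
      rw [norm_expd _ _ _ hi]
    have t3 : Tendsto (fun i => Complex.exp ((a i : ℂ) ^ 2 * (1 + (a i * u : ℝ) * Complex.I) * X i)) l (𝓝 1) := by
      have g1 : Tendsto (fun i => (a i : ℂ) ^ 2 * (1 + (a i * u : ℝ) * Complex.I)) l (𝓝 0) := by
        have := (Complex.continuous_ofReal.tendsto 0).comp hat
        simpa using (this.pow 2).mul hv
      have g2 : Tendsto (fun i => (a i : ℂ) ^ 2 * (1 + (a i * u : ℝ) * Complex.I) * X i) l (𝓝 0) := by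
        rw [tendsto_zero_iff_norm_tendsto_zero] at g1 ⊢
        have g3 : Tendsto (fun i => ‖(a i : ℂ) ^ 2 * (1 + (a i * u : ℝ) * Complex.I)‖ * R) l (𝓝 0) := by
          simpa using g1.mul_const R
        refine tendsto_of_tendsto_of_tendsto_of_le_of_le' tendsto_const_nhds g3
          (Eventually.of_forall fun i => norm_nonneg _) ?_
        filter_upwards [hX] with i hi
        rw [norm_mul _ (X i : ℂ), Complex.norm_real, Real.norm_eq_abs]
        gcongr
      have := (Complex.continuous_exp.tendsto 0).comp g2
      simpa [Function.comp_def] using this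
    have t4 : Tendsto (fun i => Complex.exp (-c * u ^ 2 / (1 + (a i * u : ℝ) * Complex.I))) l
        (𝓝 ((Real.exp (-c * u ^ 2) : ℝ) : ℂ)) := by
      have g1 := (tendsto_const_nhds (x := (-c * u ^ 2 : ℂ))).div hv one_ne_zero
      have := (Complex.continuous_exp.tendsto _).comp g1
      rw [div_one] at this
      push_cast
      exact_mod_cast this
    have := t0.mul (((t1.mul (t2.const_sub 1)).mul t3).mul t4)
    simpa [Sfun] using this

/-- The `t`-factor of the double integrand. -/
def Pfun (A : ℝ) (J : ℤ) (x : ℝ) (t : ℝ) : ℂ :=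
  Complex.exp (zline A J t * (J : ℂ)) * (zline A J t) ^ (-(1 / 2) : ℂ) *
    Complex.exp ((4 * (π : ℂ) ^ 2 * (A : ℂ)) / zline A J t) *
    (1 - Complex.exp (-(4 * (π : ℂ) ^ 2) / zline A J t)) * Complex.exp (zline A J t * x)

lemma sqrt_split (z w : ℂ) (hz : 0 < z.re) (hw : 0 < w.re) :
    ((4 * (π : ℂ) ^ 2) / (z * w)) ^ ((1 : ℂ) / 2) =
      2 * π * (z ^ (-(1 / 2) : ℂ) * w ^ (-(1 / 2) : ℂ)) := by
  have hz0 : z ≠ 0 := by rintro rfl; simp at hz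
  have hw0 : w ≠ 0 := by rintro rfl; simp at hw
  have az := abs_lt.mp (arg_abs_lt z hz)
  have aw := abs_lt.mp (arg_abs_lt w hw)
  have hl : Complex.log (z * w) = Complex.log z + Complex.log w :=
    Complex.log_mul hz0 hw0 ⟨by linarith, by linarith⟩
  have harg : (z * w).arg ≠ π := by
    rw [Complex.arg_mul hz0 hw0 ⟨by linarith, by linarith⟩]; intro h; linarith
  have hzw : z * w ≠ 0 := mul_ne_zero hz0 hw0
  have h4 : (0:ℝ) < 4 * π ^ 2 := by positivity
  have : (4 * (π : ℂ) ^ 2) / (z * w) = ((4 * π ^ 2 : ℝ) : ℂ) * (z * w)⁻¹ := by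
    push_cast; rw [div_eq_mul_inv]
  rw [this, Complex.cpow_def_of_ne_zero (mul_ne_zero (by exact_mod_cast h4.ne') (inv_ne_zero hzw)),
    Complex.log_ofReal_mul h4 (inv_ne_zero hzw), Complex.log_inv _ harg, hl,
    Complex.cpow_def_of_ne_zero hz0, Complex.cpow_def_of_ne_zero hw0, add_mul, Complex.exp_add]
  congr 1
  · have e : Real.log (4 * π ^ 2) = 2 * Real.log (2 * π) := by
      rw [show 4 * π ^ 2 = (2 * π) ^ 2 by ring, Real.log_pow]; norm_num
    rw [e]
    have : ((2 * Real.log (2 * π) : ℝ) : ℂ) * (1 / 2) = ((Real.log (2 * π) : ℝ) : ℂ) := by push_cast; ring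
    rw [this, ← Complex.ofReal_exp, Real.exp_log (by positivity)]; push_cast; rfl
  · rw [← Complex.exp_add]; congr 1; ring

lemma Pfun_continuous (A : ℝ) (hA : 0 < A) (J : ℤ) (hJ : 0 < J) (x : ℝ) : Continuous (Pfun A J x) := by
  have hJ' : (0:ℝ) < J := by exact_mod_cast hJ
  have hα : 0 < 2 * π * Real.sqrt (A / (J : ℝ)) := by positivity
  have h1 : Continuous (zline A J) := by unfold zline; fun_prop
  have h2 : ∀ t, zline A J t ≠ 0 := wline_ne _ hα
  have h3 : ∀ t, zline A J t ∈ Complex.slitPlane := wline_slit _ hα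
  unfold Pfun
  refine (((Continuous.mul ?_ ?_).mul ?_).mul ?_).mul ?_
  · fun_prop
  · exact h1.cpow continuous_const h3
  · exact Complex.continuous_exp.comp (continuous_const.div h1 h2)
  · exact continuous_const.sub (Complex.continuous_exp.comp (continuous_const.div h1 h2))
  · fun_prop

lemma Pfun_ind_integrable (A : ℝ) (hA : 0 < A) (J : ℤ) (hJ : 0 < J) (x : ℝ) :
    Integrable (Set.indicator (Set.Ioc (-π) π) (Pfun A J x)) := by
  rw [integrable_indicator_iff measurableSet_Ioc]
  exact ((Pfun_continuous A hA J hJ x).integrableOn_Icc).mono_set Set.Ioc_subset_Icc_self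

lemma Dvac_eq (A β : ℝ) (hA : 0 < A) (J : ℤ) (hJ : 0 < J)
    (hα : 2 * π * Real.sqrt (A / (J : ℝ)) < β) (h : ℝ) :
    Dvac A β J h = (1 / (2 * π) : ℂ) * ((∫ t, Set.indicator (Set.Ioc (-π) π) (Pfun A J (h - A)) t) *
      ∫ s, Qfun (4 * π ^ 2 * A) (4 * π ^ 2) (β - 2 * π * Real.sqrt (A / (J : ℝ))) (h - A) s) := by
  have hJ' : (0:ℝ) < J := by exact_mod_cast hJ
  have hα0 : 0 < 2 * π * Real.sqrt (A / (J : ℝ)) := by positivity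
  set α := 2 * π * Real.sqrt (A / (J : ℝ)) with hαd
  set Q := Qfun (4 * π ^ 2 * A) (4 * π ^ 2) (β - α) (h - A) with hQ
  set P := Set.indicator (Set.Ioc (-π) π) (Pfun A J (h - A)) with hP
  have iP : Integrable P := Pfun_ind_integrable A hA J hJ _
  have iQ : Integrable Q := Qfun_integrable _ _ _ _ (by linarith)
  have hconv := integral_convolution (ContinuousLinearMap.mul ℂ ℂ) iP iQ
  rw [ContinuousLinearMap.mul_apply'] at hconv
  rw [← hconv, ← integral_const_mul]
  unfold Dvac
  congr 1
  funext s
  rw [convolution_def]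
  unfold Fvac
  rw [intervalIntegral.integral_of_le (by linarith [pi_pos]), ← integral_indicator measurableSet_Ioc]
  rw [← integral_mul_const, ← integral_smul, ← integral_const_mul]
  congr 1
  funext t
  rw [ContinuousLinearMap.mul_apply', hP]
  by_cases ht : t ∈ Set.Ioc (-π) π
  · rw [Set.indicator_of_mem ht, Set.indicator_of_mem ht]
    set z := zline A J t with hz
    have hzre : 0 < z.re := by
      rw [hz, zline, wline_re]; exact hα0
    have hw : ((β:ℂ) + s * Complex.I) - z = ((β - α : ℝ) : ℂ) + ((s - t : ℝ) : ℂ) * Complex.I := by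
      rw [hz, zline, ← hαd]; push_cast; ring
    have hwre : 0 < (((β:ℂ) + s * Complex.I) - z).re := by
      rw [hw, wline_re]; linarith
    have hbz : ((β:ℂ) + s * Complex.I) = z + (((β:ℂ) + s * Complex.I) - z) := by ring
    rw [sqrt_split _ _ hzre hwre, hQ, Qfun, ← hw, Pfun, ← hz]
    set w := ((β:ℂ) + s * Complex.I) - z with hwd
    rw [hbz, add_mul, Complex.exp_add, Complex.exp_add]
    have hpi : (π : ℂ) ≠ 0 := by exact_mod_cast pi_ne_zero
    simp only [Complex.real_smul]
    push_cast
    field_simp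
  · rw [Set.indicator_of_notMem ht, Set.indicator_of_notMem ht]; simp

lemma Pfun_scale (A : ℝ) (hA : 0 < A) (J : ℤ) (hJ : 0 < J) (x : ℝ) :
    ((Real.sqrt (2 * (J : ℝ)) * Real.exp (-(4 * π * Real.sqrt (A * (J : ℝ)))) : ℝ) : ℂ) *
      (∫ t, Set.indicator (Set.Ioc (-π) π) (Pfun A J x) t) =
    ((√2 * (2 * π * √A) : ℝ) : ℂ) *
      ∫ u, Sfun (4 * π ^ 2 * A) (4 * π ^ 2) (√(2 * π * Real.sqrt (A / (J : ℝ)))) x u := by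
  have hJ' : (0:ℝ) < J := by exact_mod_cast hJ
  have hα0 : 0 < 2 * π * Real.sqrt (A / (J : ℝ)) := by positivity
  set a := √(2 * π * Real.sqrt (A / (J : ℝ))) with ha
  have ha0 : 0 < a := Real.sqrt_pos.mpr hα0
  have ha2 : a ^ 2 = 2 * π * Real.sqrt (A / (J : ℝ)) := Real.sq_sqrt hα0.le
  have hsA : √A ^ 2 = A := Real.sq_sqrt hA.le
  have hsJ : √(J:ℝ) ^ 2 = J := Real.sq_sqrt hJ'.le
  have hsA0 : 0 < √A := Real.sqrt_pos.mpr hA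
  have hsJ0 : 0 < √(J:ℝ) := Real.sqrt_pos.mpr hJ'
  have ha2' : a ^ 2 * √(J:ℝ) = 2 * π * √A := by
    rw [ha2, Real.sqrt_div hA.le]; field_simp
  have hJ4 : (J:ℝ) = 4 * π ^ 2 * A / a ^ 4 := by
    rw [eq_div_iff (by positivity)]
    have := congrArg (· ^ 2) ha2'
    simp only [mul_pow, hsJ, hsA] at this
    nlinarith
  have hs1 : Real.sqrt (2 * (J : ℝ)) = √2 * (2 * π * √A) / a ^ 2 := by
    rw [Real.sqrt_mul (by norm_num), ← ha2']; field_simp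
  have hs2 : 4 * π * Real.sqrt (A * (J : ℝ)) = 2 * (4 * π ^ 2 * A) / a ^ 2 := by
    rw [Real.sqrt_mul hA.le, eq_div_iff (by positivity)]
    calc 4 * π * (√A * √(J:ℝ)) * a ^ 2 = 4 * π * √A * (a ^ 2 * √(J:ℝ)) := by ring
      _ = 2 * (4 * π ^ 2 * √A ^ 2) := by rw [ha2']; ring
      _ = _ := by rw [hsA]
  have hsub := Measure.integral_comp_mul_left (Set.indicator (Set.Ioc (-π) π) (Pfun A J x)) (a ^ 3)
  rw [abs_of_pos (by positivity), Complex.real_smul] at hsub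
  have ha' : (a:ℂ) ≠ 0 := by exact_mod_cast ha0.ne'
  have hsub' : (∫ t, Set.indicator (Set.Ioc (-π) π) (Pfun A J x) t) =
      (a:ℂ) ^ 3 * ∫ u, Set.indicator (Set.Ioc (-π) π) (Pfun A J x) (a ^ 3 * u) := by
    rw [hsub]; push_cast; field_simp
  rw [hsub', ← mul_assoc, ← integral_const_mul, ← integral_const_mul]
  congr 1
  funext u
  unfold Sfun
  by_cases hu : a ^ 3 * u ∈ Set.Ioc (-π) π
  · rw [Set.indicator_of_mem hu, Set.indicator_of_mem hu]
    set v : ℂ := 1 + ((a * u : ℝ) : ℂ) * Complex.I with hv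
    have hv0 : v ≠ 0 := v_ne _
    have hz : zline A J (a ^ 3 * u) = (a:ℂ) ^ 2 * v := by
      rw [zline, ← ha2, hv]; push_cast; ring
    have hzp : ((a:ℂ) ^ 2 * v) ^ (-(1 / 2) : ℂ) = (a:ℂ)⁻¹ * v ^ (-(1 / 2) : ℂ) := by
      have h2 : (0:ℝ) < a ^ 2 := by positivity
      have : (a:ℂ) ^ 2 = ((a ^ 2 : ℝ) : ℂ) := by push_cast; rfl
      rw [this, Complex.cpow_def_of_ne_zero (mul_ne_zero (by exact_mod_cast h2.ne') hv0),
        Complex.log_ofReal_mul h2 hv0, Complex.cpow_def_of_ne_zero hv0, add_mul, Complex.exp_add]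
      congr 1
      rw [Real.log_pow]
      have : (((2:ℕ) * Real.log a : ℝ) : ℂ) * (-(1/2)) = -((Real.log a : ℝ) : ℂ) := by push_cast; ring
      rw [this, Complex.exp_neg, ← Complex.ofReal_exp, Real.exp_log ha0]
    have hJc : (J:ℂ) = 4 * (π:ℂ) ^ 2 * A / (a:ℂ) ^ 4 := by
      have : (J:ℂ) = (((J:ℤ):ℝ):ℂ) := by push_cast; rfl
      rw [this, hJ4]; push_cast; rfl
    have hI : (v - 1) ^ 2 = - ((a:ℂ) ^ 2 * u ^ 2) := by
      rw [hv]; push_cast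
      linear_combination ((a:ℂ) ^ 2 * u ^ 2) * Complex.I_sq
    have hexp : Complex.exp (((-(4 * π * Real.sqrt (A * (J : ℝ))) : ℝ) : ℂ)) *
        (Complex.exp ((a:ℂ) ^ 2 * v * J) * Complex.exp (4 * (π:ℂ) ^ 2 * A / ((a:ℂ) ^ 2 * v))) =
        Complex.exp (-((4 * π ^ 2 * A : ℝ) : ℂ) * u ^ 2 / v) := by
      rw [← Complex.exp_add, ← Complex.exp_add, hs2, hJc]
      congr 1
      push_cast
      field_simp
      linear_combination (A : ℂ) * hI
    rw [Pfun, hz, hzp, hs1, ← hexp]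
    push_cast
    field_simp
  · rw [Set.indicator_of_notMem hu, Set.indicator_of_notMem hu]; simp

lemma rhoc_eq (A : ℝ) (hA : 0 < A) : ∃ p q : ℂ, p ^ 2 = 4 * ((4 * π ^ 2 * A : ℝ) : ℂ) ∧
    q ^ 2 = 4 * (((4 * π ^ 2 * A : ℝ) : ℂ) - ((4 * π ^ 2 : ℝ) : ℂ)) ∧
    ∀ h, ((rhoc A h : ℝ) : ℂ) = √2 * kfun p q (√(h - A)) := by
  have hmain : ∀ q : ℂ, ∀ g : ℝ → ℝ, (∀ x : ℝ, 0 < x → Complex.cosh (q * (√x : ℝ)) = ((g x : ℝ) : ℂ)) →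
      ∀ h, ((if h ≤ A then 0 else Real.sqrt (2 / (h - A)) *
        (Real.cosh (4 * π * Real.sqrt (A * (h - A))) - g (h - A)) : ℝ) : ℂ) =
        √2 * kfun ((4 * π * √A : ℝ) : ℂ) q (√(h - A)) := by
    intro q g hg h
    split_ifs with hh
    · rw [Real.sqrt_eq_zero_of_nonpos (x := h - A) (by linarith), kfun_zero]; simp
    · have hx : 0 < h - A := by linarith
      rw [kfun, hg _ hx, Real.sqrt_mul hA.le, Real.sqrt_div (by norm_num)]
      have h0 : (√(h - A) : ℂ) ≠ 0 := by exact_mod_cast (Real.sqrt_pos.mpr hx).ne'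
      push_cast
      rw [← mul_assoc (4 * (π:ℂ))]
      field_simp
  have hp : ((4 * π * √A : ℝ) : ℂ) ^ 2 = 4 * ((4 * π ^ 2 * A : ℝ) : ℂ) := by
    rw [← Complex.ofReal_pow, mul_pow, Real.sq_sqrt hA.le]; push_cast; ring
  by_cases h1 : 1 ≤ A
  · refine ⟨((4 * π * √A : ℝ) : ℂ), ((4 * π * √(A - 1) : ℝ) : ℂ), hp, ?_, ?_⟩
    · rw [← Complex.ofReal_pow, mul_pow, Real.sq_sqrt (by linarith)]; push_cast; ring
    · intro h
      rw [← hmain _ (fun x => Real.cosh (4 * π * Real.sqrt ((A - 1) * x)))]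
      · simp only [rhoc, h1, if_true]
      · intro x hx
        rw [Real.sqrt_mul (by linarith), ← mul_assoc]; push_cast; rfl
  · refine ⟨((4 * π * √A : ℝ) : ℂ), ((4 * π * √(1 - A) : ℝ) : ℂ) * Complex.I, hp, ?_, ?_⟩
    · rw [mul_pow, Complex.I_sq, ← Complex.ofReal_pow, mul_pow, Real.sq_sqrt (by linarith)]; push_cast; ring
    · intro h
      rw [← hmain _ (fun x => Real.cos (4 * π * Real.sqrt ((1 - A) * x)))]
      · simp only [rhoc, h1, if_false]
      · intro x hx
        rw [Real.sqrt_mul (by linarith), ← mul_assoc, mul_right_comm, Complex.cosh_mul_I]; push_cast; rfl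

/-- Proposition: `√(2J) e^(-4π√(AJ)) D_vac^β(J,·)` converges to `ρ_c` uniformly on any
compact interval. -/
theorem Dvac_tendsto_rhoc_uniformly
    (A β : ℝ) (hA : 0 < A) (hβ : 0 < β) (a b : ℝ) :
    TendstoUniformlyOn
      (fun (J : ℤ) (h : ℝ) =>
        ((Real.sqrt (2 * (J : ℝ)) * Real.exp (-(4 * π * Real.sqrt (A * (J : ℝ)))) : ℝ) : ℂ) *
          Dvac A β J h)
      (fun h => ((rhoc A h : ℝ) : ℂ)) atTop (Set.Icc a b) := by
  obtain ⟨p, q, hp, hq, hr⟩ := rhoc_eq A hA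
  have hc : 0 < 4 * π ^ 2 * A := by positivity
  have hd : 0 < 4 * π ^ 2 := by positivity
  -- the scale `α_J → 0`
  have hα : Tendsto (fun J : ℤ => 2 * π * Real.sqrt (A / (J : ℝ))) atTop (𝓝 0) := by
    have h1 : Tendsto (fun J : ℤ => A / (J : ℝ)) atTop (𝓝 0) :=
      tendsto_const_nhds.div_atTop tendsto_intCast_atTop_atTop
    have h2 := (Real.continuous_sqrt.tendsto 0).comp h1
    simpa [Function.comp_def] using h2.const_mul (2 * π)
  have hJpos : ∀ᶠ J : ℤ in atTop, 0 < J := eventually_gt_atTop 0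
  have ha : Tendsto (fun J : ℤ => √(2 * π * Real.sqrt (A / (J : ℝ)))) atTop (𝓝[>] 0) := by
    apply tendsto_nhdsWithin_of_tendsto_nhds_of_eventually_within
    · have h2 := (Real.continuous_sqrt.tendsto 0).comp hα
      simpa [Function.comp_def] using h2
    · filter_upwards [hJpos] with J hJ
      have hJ' : (0:ℝ) < J := by exact_mod_cast hJ
      rw [Set.mem_Ioi]; positivity
  -- uniform saddle point limit
  have hS := Sfun_tendsto (atTop ×ˢ 𝓟 (Set.Icc a b) : Filter (ℤ × ℝ)) (4 * π ^ 2 * A) (4 * π ^ 2)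
    (max |a - A| |b - A|) hc hd (fun i => √(2 * π * Real.sqrt (A / (i.1 : ℝ)))) (fun i => i.2 - A)
    (ha.comp tendsto_fst) (by
      rw [eventually_prod_principal_iff]
      refine Eventually.of_forall fun J h hh => ?_
      exact abs_le_max_abs_abs (by linarith [hh.1]) (by linarith [hh.2]))
  set κ : ℂ := (1 / (2 * π) : ℂ) * ((√2 * (2 * π * √A) : ℝ) : ℂ) * (2 * √π) / √2 with hκ
  have hκ1 : κ * ((√(π / (4 * π ^ 2 * A)) : ℝ) : ℂ) = 1 := by
    have h1 : √(π / (4 * π ^ 2 * A)) = √π / (2 * π * √A) := by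
      rw [Real.sqrt_div pi_pos.le, Real.sqrt_mul (by positivity),
        show 4 * π ^ 2 = (2 * π) ^ 2 by ring, Real.sqrt_sq (by positivity)]
    have h2 : (√π : ℂ) ^ 2 = π := by
      exact_mod_cast congrArg (fun r : ℝ => (r : ℂ)) (Real.sq_sqrt pi_pos.le)
    have h3 : (√2 : ℂ) ≠ 0 := by exact_mod_cast (Real.sqrt_pos.mpr two_pos).ne'
    have h4 : (√A : ℂ) ≠ 0 := by exact_mod_cast (Real.sqrt_pos.mpr hA).ne'
    have hpi : (π : ℂ) ≠ 0 := by exact_mod_cast pi_ne_zero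
    rw [hκ, h1]
    push_cast
    field_simp
    rw [h2]
  have hT := hS.const_mul κ
  rw [hκ1] at hT
  -- boundedness of the limit
  have hcont : Continuous (fun h => ((rhoc A h : ℝ) : ℂ)) := by
    simp_rw [hr]
    have := (kfun_continuous p q).comp (Real.continuous_sqrt.comp (continuous_id.sub (continuous_const (y := A))))
    exact continuous_const.mul this
  obtain ⟨M, hM⟩ := isCompact_Icc.exists_bound_of_continuousOn (hcont.continuousOn (s := Set.Icc a b))
  rw [Metric.tendstoUniformlyOn_iff]
  intro ε hε
  have hM1 : 0 < |M| + 1 := by positivity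
  have hev := (Metric.tendsto_nhds.mp hT) (ε / (|M| + 1)) (by positivity)
  rw [eventually_prod_principal_iff] at hev
  filter_upwards [hev, hJpos, hα.eventually (eventually_lt_nhds hβ)] with J h1 hJ hαβ h hh
  have h2 := h1 h hh
  have hval : ((Real.sqrt (2 * (J : ℝ)) * Real.exp (-(4 * π * Real.sqrt (A * (J : ℝ)))) : ℝ) : ℂ) * Dvac A β J h =
      (κ * ∫ u, Sfun (4 * π ^ 2 * A) (4 * π ^ 2) (√(2 * π * Real.sqrt (A / (J : ℝ)))) (h - A) u) *
        ((rhoc A h : ℝ) : ℂ) := by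
    rw [Dvac_eq A β hA J hJ hαβ, Qfun_integral _ _ _ _ (by linarith) p q hp hq, hr, hκ]
    have h3 := Pfun_scale A hA J hJ (h - A)
    have h4 : (√2 : ℂ) ≠ 0 := by exact_mod_cast (Real.sqrt_pos.mpr two_pos).ne'
    generalize (∫ t, Set.indicator (Set.Ioc (-π) π) (Pfun A J (h - A)) t) = I1 at h3 ⊢
    generalize (∫ u, Sfun (4 * π ^ 2 * A) (4 * π ^ 2) (√(2 * π * Real.sqrt (A / (J : ℝ)))) (h - A) u) = I2 at h3 ⊢
    generalize ((Real.sqrt (2 * (J : ℝ)) * Real.exp (-(4 * π * Real.sqrt (A * (J : ℝ)))) : ℝ) : ℂ) = N at h3 ⊢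
    generalize ((√2 * (2 * π * √A) : ℝ) : ℂ) = N2 at h3 ⊢
    generalize kfun p q (√(h - A)) = k
    have h7 : (1 / (2 * π) : ℂ) * N2 * (2 * √π) / √2 * I2 * (√2 * k) =
        (1 / (2 * π) : ℂ) * (2 * √π) * k * (N2 * I2) := by
      field_simp
    rw [h7, ← h3]; ring
  rw [hval, dist_comm, dist_eq_norm]
  rw [dist_eq_norm] at h2
  have h5 : ∀ T r : ℂ, T * r - r = (T - 1) * r := by intro T r; ring
  rw [h5, norm_mul]
  have h6 : ‖((rhoc A h : ℝ) : ℂ)‖ < |M| + 1 := by linarith [hM h hh, le_abs_self M]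
  calc _ ≤ ε / (|M| + 1) * ‖((rhoc A h : ℝ) : ℂ)‖ := by gcongr
    _ < ε / (|M| + 1) * (|M| + 1) := by
      apply mul_lt_mul_of_pos_left h6; positivity
    _ = ε := by field_simp
end
end

section
/- Fix A > 0 and a complex number β_L with Re(β_L) > 0. Then lim_{J→∞} √(2J) · e^{−4π√(A·J)} · F_vac(β_L, J) = √(2π/β_L) · e^{4π²A/β_L} · (1 − e^{−4π²/β_L}), where the square root is the principal branch. -/
open MeasureTheory Filter Topology Real

noncomputable section

/-- Rescaled integrand: `x = M^(-1/2)`, `q = 1 + i u x`, `z = a x^2 q`, `a = 4π²A`. -/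
def Hres (a : ℝ) (β : ℂ) (x u : ℝ) : ℂ :=
  Complex.exp (-(u:ℂ)^2 / (1 + (u * x : ℝ) * Complex.I)) *
  ((4 * (π : ℂ) ^ 2) / ((1 + (u * x : ℝ) * Complex.I) *
    (β - a * x^2 * (1 + (u * x : ℝ) * Complex.I)))) ^ ((1 : ℂ) / 2) *
  Complex.exp (a / (β - a * x^2 * (1 + (u * x : ℝ) * Complex.I))) *
  (1 - Complex.exp (-(4 * (π : ℂ) ^ 2) / (β - a * x^2 * (1 + (u * x : ℝ) * Complex.I)))) *
  (1 - Complex.exp (-(4 * (π : ℂ) ^ 2) / (a * x^2 * (1 + (u * x : ℝ) * Complex.I))))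

lemma q_re (y : ℝ) : (1 + (y : ℝ) * Complex.I : ℂ).re = 1 := by simp

lemma q_ne (y : ℝ) : (1 + (y : ℝ) * Complex.I : ℂ) ≠ 0 := by
  intro h
  have := congrArg Complex.re h
  simp at this

lemma Hres_meas (a : ℝ) (β : ℂ) (x : ℝ) : Measurable (Hres a β x) := by
  unfold Hres
  fun_prop

lemma Hres_tendsto (a : ℝ) (ha : 0 < a) (β : ℂ) (hβ : 0 < β.re) (u : ℝ) :
    Tendsto (fun x => Hres a β x u) (𝓝[>] 0)
      (𝓝 (Complex.exp (-(u:ℂ)^2) * ((4 * (π : ℂ) ^ 2) / β) ^ ((1 : ℂ) / 2) *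
        Complex.exp (a / β) * (1 - Complex.exp (-(4 * (π : ℂ) ^ 2) / β)))) := by
  have hβ0 : β ≠ 0 := by rintro rfl; simp at hβ
  have h1 : ContinuousAt (fun x : ℝ => Complex.exp (-(u:ℂ)^2 / (1 + (u * x : ℝ) * Complex.I)) *
  ((4 * (π : ℂ) ^ 2) / ((1 + (u * x : ℝ) * Complex.I) *
    (β - a * x^2 * (1 + (u * x : ℝ) * Complex.I)))) ^ ((1 : ℂ) / 2) *
  Complex.exp (a / (β - a * x^2 * (1 + (u * x : ℝ) * Complex.I))) *
  (1 - Complex.exp (-(4 * (π : ℂ) ^ 2) / (β - a * x^2 * (1 + (u * x : ℝ) * Complex.I))))) 0 := by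
    have e1 : ContinuousAt (fun x : ℝ => (1 + (u * x : ℝ) * Complex.I : ℂ)) 0 := by fun_prop
    have e2 : ContinuousAt (fun x : ℝ => β - a * x^2 * (1 + (u * x : ℝ) * Complex.I : ℂ)) 0 := by
      fun_prop
    have n1 : (1 + (u * 0 : ℝ) * Complex.I : ℂ) ≠ 0 := by simp
    have n2 : β - a * ((0:ℝ):ℂ)^2 * (1 + (u * 0 : ℝ) * Complex.I : ℂ) ≠ 0 := by simpa using hβ0
    refine ContinuousAt.mul (ContinuousAt.mul (ContinuousAt.mul ?_ ?_) ?_) ?_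
    · exact (continuousAt_const.div e1 n1).cexp
    · refine ContinuousAt.cpow (continuousAt_const.div (e1.mul e2) (mul_ne_zero n1 n2)) continuousAt_const ?_
      left
      have : (0:ℝ) < (4 * (π:ℝ)^2) * (β.re / Complex.normSq β) := by
        have := Complex.normSq_pos.2 hβ0
        positivity
      have h2 : ((4 * (π : ℂ) ^ 2) / ((1 + (u * 0 : ℝ) * Complex.I) *
        (β - a * ((0:ℝ):ℂ)^2 * (1 + (u * 0 : ℝ) * Complex.I)))) = ((4 * π^2 : ℝ):ℂ) * β⁻¹ := by
        push_cast; simp [div_eq_mul_inv]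
      rw [h2, Complex.re_ofReal_mul, Complex.inv_re]
      exact this
    · exact (continuousAt_const.div e2 n2).cexp
    · exact continuousAt_const.sub (continuousAt_const.div e2 n2).cexp
  have h2 : Tendsto (fun x : ℝ => (1 - Complex.exp (-(4 * (π : ℂ) ^ 2) / (a * x^2 * (1 + (u * x : ℝ) * Complex.I))))) (𝓝[>] 0) (𝓝 1) := by
    suffices h : Tendsto (fun x : ℝ => Complex.exp (-(4 * (π : ℂ) ^ 2) / (a * x^2 * (1 + (u * x : ℝ) * Complex.I)))) (𝓝[>] 0) (𝓝 0) by
      simpa using h.const_sub 1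
    rw [Complex.tendsto_exp_nhds_zero_iff]
    have h3 : ∀ x : ℝ, (-(4 * (π : ℂ) ^ 2) / (a * x^2 * (1 + (u * x : ℝ) * Complex.I))).re
        = (-(4 * π^2 / a / (1 + (u*x)^2))) * (x^2)⁻¹ := by
      intro x
      have : (-(4 * (π : ℂ) ^ 2) / (a * x^2 * (1 + (u * x : ℝ) * Complex.I)))
        = ((-(4 * π^2 / a) * (x^2)⁻¹ : ℝ):ℂ) * (1 + (u * x : ℝ) * Complex.I)⁻¹ := by
        push_cast
        rw [div_eq_mul_inv, mul_inv, mul_inv]; ring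
      rw [this, Complex.re_ofReal_mul, Complex.inv_re, q_re, Complex.normSq_apply]
      simp
      ring
    simp_rw [h3]
    have h4 : Tendsto (fun x : ℝ => (x^2)⁻¹) (𝓝[>] 0) atTop := by
      apply Filter.Tendsto.inv_tendsto_nhdsGT_zero
      rw [tendsto_nhdsWithin_iff]
      constructor
      · have : ContinuousAt (fun x : ℝ => x^2) 0 := by fun_prop
        have := this.tendsto
        simp at this
        exact this.mono_left nhdsWithin_le_nhds
      · filter_upwards [self_mem_nhdsWithin] with x hx
        simp at hx ⊢; positivity
    have h5 : Tendsto (fun x : ℝ => (-(4 * π^2 / a / (1 + (u*x)^2)))) (𝓝[>] 0) (𝓝 (-(4 * π^2 / a))) := by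
      have : ContinuousAt (fun x : ℝ => (-(4 * π^2 / a / (1 + (u*x)^2)))) 0 := by
        refine (continuousAt_const.div (by fun_prop) (by simp)).neg
      have := this.tendsto
      simp only [mul_zero, ne_eq, OfNat.ofNat_ne_zero, not_false_eq_true, zero_pow, add_zero, div_one] at this
      exact this.mono_left nhdsWithin_le_nhds
    exact h5.neg_mul_atTop (by have := pi_pos; simp; positivity) h4
  have h3 := (Tendsto.mono_left h1.tendsto (nhdsWithin_le_nhds (s := Set.Ioi 0))).mul h2
  simp only [Hres]
  convert h3 using 2
  simp

lemma exp_bound_s6 (K w M : ℝ) (hK : 0 < K) (hw : 0 ≤ w) (hM : 1 ≤ M) (h : w ≤ K * M^3) :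
    Real.exp (-(w / (1 + w / M))) ≤ (2 + 96 * K) * (1 + w)⁻¹ := by
  have hM0 : 0 < M := by linarith
  rw [← div_eq_mul_inv, le_div_iff₀ (by positivity), Real.exp_neg, inv_mul_le_iff₀ (Real.exp_pos _)]
  rcases le_total w M with h1 | h1
  · have hy : w / 2 ≤ w / (1 + w / M) := by
      apply div_le_div_of_nonneg_left hw (by positivity)
      have : w / M ≤ 1 := (div_le_one hM0).2 h1
      linarith
    have := Real.add_one_le_exp (w / (1 + w / M))
    nlinarith
  · have hy : M / 2 ≤ w / (1 + w / M) := by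
      rw [le_div_iff₀ (by positivity)]
      have : M / 2 * (1 + w / M) = M / 2 + w / 2 := by field_simp
      linarith
    have h6 := Real.pow_div_factorial_le_exp (M/2) (by positivity) 3
    have h7 := Real.exp_le_exp.2 hy
    have h8 : M^3/48 ≤ Real.exp (w / (1 + w / M)) := by
      refine le_trans (le_of_eq ?_) (h6.trans h7)
      simp [Nat.factorial]; ring
    have h9 : 1 + w ≤ 2 * K * M^3 := by linarith
    nlinarith [Real.exp_pos (w / (1 + w / M))]

lemma Hres_bound (a : ℝ) (ha : 0 < a) (β : ℂ) (hβ : 0 < β.re) (x u : ℝ) (hx : 0 < x) (hx1 : x ≤ 1)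
    (hxβ : a * x^2 ≤ β.re / 2) (hu : |u| * (a * x^3) ≤ π) :
    ‖Hres a β x u‖ ≤ (2 + 96 * (π^2/a^2)) * (1 + u^2)⁻¹ *
      (4 * π^2 / (β.re/2)) ^ ((1:ℝ)/2) * Real.exp (a / (β.re / 2)) *
      (1 + Real.exp (4 * π^2 / (β.re / 2))) * 2 := by
  have hπ := pi_pos
  set q : ℂ := 1 + (u * x : ℝ) * Complex.I with hq
  have hqre : q.re = 1 := q_re _
  have hq0 : q ≠ 0 := q_ne _
  have hqn : 1 ≤ ‖q‖ := by
    have := Complex.abs_re_le_norm q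
    rwa [hqre, abs_one] at this
  have hz : ((a:ℂ) * x^2 * q) = ((a * x^2 : ℝ) : ℂ) * q := by push_cast; ring
  have hβz : β.re / 2 ≤ ‖β - a * x^2 * q‖ := by
    refine le_trans ?_ (Complex.re_le_norm _)
    rw [hz, Complex.sub_re, Complex.re_ofReal_mul, hqre]; linarith
  have hβz0 : 0 < ‖β - a * x^2 * q‖ := by linarith
  have hnq : Complex.normSq q = 1 + (u*x)^2 := by
    rw [Complex.normSq_apply, hq]; simp; ring
  have hπn : ‖(4 * (π:ℂ)^2)‖ = 4 * π^2 := by simp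
  unfold Hres
  rw [← hq]
  rw [norm_mul, norm_mul, norm_mul, norm_mul]
  gcongr ?_ * ?_ * ?_ * ?_ * ?_
  · rw [Complex.norm_exp]
    have : (-(u:ℂ)^2 / q).re = -(u^2 / (1 + u^2 / (x^2)⁻¹)) := by
      have : (-(u:ℂ)^2 / q) = ((-u^2 : ℝ):ℂ) * q⁻¹ := by push_cast; rw [div_eq_mul_inv]
      rw [this, Complex.re_ofReal_mul, Complex.inv_re, hqre, hnq]
      simp; ring
    rw [this]
    apply exp_bound_s6 _ _ _ (by positivity) (by positivity)
    · exact (one_le_inv₀ (by positivity)).2 (by nlinarith)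
    · have h2 : (|u| * (a * x^3))^2 ≤ π^2 := by gcongr
      rw [mul_pow, sq_abs] at h2
      have : π ^ 2 / a ^ 2 * (x ^ 2)⁻¹ ^ 3 = π^2 / (a * x^3)^2 := by field_simp
      rw [this, le_div_iff₀ (by positivity)]; exact h2
  · have : ((1:ℂ)/2) = (((1:ℝ)/2 : ℝ):ℂ) := by push_cast; rfl
    rw [this, Complex.norm_cpow_real, norm_div, hπn, norm_mul]
    gcongr
    nlinarith
  · refine (Complex.norm_exp_le_exp_norm _).trans ?_
    rw [norm_div, Complex.norm_real, Real.norm_of_nonneg ha.le]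
    gcongr
  · refine (norm_sub_le _ _).trans ?_
    rw [norm_one]
    gcongr
    refine (Complex.norm_exp_le_exp_norm _).trans ?_
    rw [norm_div, norm_neg, hπn]
    gcongr
  · refine (norm_sub_le _ _).trans ?_
    rw [norm_one, Complex.norm_exp]
    have : (-(4 * (π:ℂ)^2) / (a * x^2 * q)).re ≤ 0 := by
      have : (-(4 * (π:ℂ)^2) / (a * x^2 * q)) = ((-(4*π^2/(a*x^2)) : ℝ):ℂ) * q⁻¹ := by
        push_cast; field_simp
      rw [this, Complex.re_ofReal_mul, Complex.inv_re, hqre, hnq]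
      have : 0 ≤ 4*π^2/(a*x^2) * (1 / (1 + (u*x)^2)) := by positivity
      linarith
    have := Real.exp_le_one_iff.2 this
    linarith

lemma main_tendsto (a : ℝ) (ha : 0 < a) (β : ℂ) (hβ : 0 < β.re) :
    Tendsto (fun x : ℝ => ∫ u in (-(π / (a * x^3)))..(π / (a * x^3)), Hres a β x u) (𝓝[>] 0)
      (𝓝 (∫ u : ℝ, (Complex.exp (-(u:ℂ)^2) * ((4 * (π : ℂ) ^ 2) / β) ^ ((1 : ℂ) / 2) *
        Complex.exp (a / β) * (1 - Complex.exp (-(4 * (π : ℂ) ^ 2) / β))))) := by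
  have hπ := pi_pos
  have key : Tendsto (fun x : ℝ => ∫ u : ℝ,
      (Set.Ioc (-(π / (a * x^3))) (π / (a * x^3))).indicator (Hres a β x) u) (𝓝[>] 0)
      (𝓝 (∫ u : ℝ, (Complex.exp (-(u:ℂ)^2) * ((4 * (π : ℂ) ^ 2) / β) ^ ((1 : ℂ) / 2) *
        Complex.exp (a / β) * (1 - Complex.exp (-(4 * (π : ℂ) ^ 2) / β))))) := by
    apply tendsto_integral_filter_of_dominated_convergence
      (fun u : ℝ => (2 + 96 * (π^2/a^2)) * (1 + u^2)⁻¹ *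
      (4 * π^2 / (β.re/2)) ^ ((1:ℝ)/2) * Real.exp (a / (β.re / 2)) *
      (1 + Real.exp (4 * π^2 / (β.re / 2))) * 2)
    · exact Eventually.of_forall fun x =>
        ((Hres_meas a β x).indicator measurableSet_Ioc).aestronglyMeasurable
    · have e1 : ∀ᶠ x : ℝ in 𝓝[>] 0, x ≤ 1 :=
        nhdsWithin_le_nhds (Iic_mem_nhds one_pos)
      have e2 : ∀ᶠ x : ℝ in 𝓝[>] 0, a * x^2 ≤ β.re / 2 := by
        have : ContinuousAt (fun x : ℝ => a * x^2) 0 := by fun_prop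
        have := this.tendsto.eventually_le_const (u := β.re / 2) (by simpa using hβ)
        exact nhdsWithin_le_nhds this
      filter_upwards [e1, e2, self_mem_nhdsWithin] with x h1 h2 h3
      simp only [Set.mem_Ioi] at h3
      refine Eventually.of_forall fun u => ?_
      by_cases hu : u ∈ Set.Ioc (-(π / (a * x^3))) (π / (a * x^3))
      · rw [Set.indicator_of_mem hu]
        apply Hres_bound a ha β hβ x u h3 h1 h2
        rw [← le_div_iff₀ (by positivity)]
        exact abs_le.2 ⟨hu.1.le, hu.2⟩
      · rw [Set.indicator_of_notMem hu, norm_zero]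
        positivity
    · exact ((((integrable_inv_one_add_sq.const_mul _).mul_const _).mul_const _).mul_const _).mul_const _
    · refine Eventually.of_forall fun u => ?_
      refine (Hres_tendsto a ha β hβ u).congr' ?_
      have e2 : ∀ᶠ x : ℝ in 𝓝[>] 0, |u| * (a * x^3) < π := by
        have : ContinuousAt (fun x : ℝ => |u| * (a * x^3)) 0 := by fun_prop
        have := this.tendsto.eventually_lt_const (u := π) (by simpa using hπ)
        exact nhdsWithin_le_nhds this
      filter_upwards [e2, self_mem_nhdsWithin] with x h2 h3
      simp only [Set.mem_Ioi] at h3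
      rw [← lt_div_iff₀ (by positivity)] at h2
      rw [Set.indicator_of_mem]
      exact ⟨(abs_lt.1 h2).1, (abs_lt.1 h2).2.le⟩
  refine key.congr' ?_
  filter_upwards [self_mem_nhdsWithin] with x h3
  simp only [Set.mem_Ioi] at h3
  rw [integral_indicator measurableSet_Ioc, intervalIntegral.integral_of_le]
  have : 0 < π / (a * x^3) := by positivity
  linarith

lemma sqrt_scale (c : ℝ) (hc : 0 < c) (w : ℂ) :
    (((c : ℝ) : ℂ) * w) ^ ((1:ℂ)/2) = ((Real.sqrt c : ℝ) : ℂ) * w ^ ((1:ℂ)/2) := by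
  have e2 : ((1:ℂ)/2) = (((1:ℝ)/2 : ℝ):ℂ) := by push_cast; rfl
  have hcc : (c:ℂ) ≠ 0 := by exact_mod_cast hc.ne'
  rw [Real.sqrt_eq_rpow, Complex.ofReal_cpow hc.le, ← e2]
  rcases eq_or_ne w 0 with rfl | hw
  · simp
  · rw [Complex.cpow_def_of_ne_zero (mul_ne_zero hcc hw), Complex.cpow_def_of_ne_zero hcc,
      Complex.cpow_def_of_ne_zero hw, ← Complex.exp_add, Complex.log_ofReal_mul hc hw,
      Complex.ofReal_log hc.le]
    ring_nf

lemma limit_value (a : ℝ) (β : ℂ) :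
    ((Real.sqrt 2 / (2 * π) : ℝ) : ℂ) *
    (∫ u : ℝ, (Complex.exp (-(u:ℂ)^2) * ((4 * (π : ℂ) ^ 2) / β) ^ ((1 : ℂ) / 2) *
        Complex.exp (a / β) * (1 - Complex.exp (-(4 * (π : ℂ) ^ 2) / β)))) =
    (2 * (π : ℂ) / β) ^ ((1 : ℂ) / 2) * Complex.exp (a / β) *
        (1 - Complex.exp (-(4 * (π : ℂ) ^ 2) / β)) := by
  have hπ := pi_pos
  rw [integral_mul_const, integral_mul_const, integral_mul_const]
  have h1 : ∫ u : ℝ, Complex.exp (-(u:ℂ)^2) = ((Real.sqrt π : ℝ):ℂ) := by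
    have h := integral_gaussian 1
    rw [div_one] at h
    rw [← h, ← integral_complex_ofReal]
    congr 1
    ext u
    push_cast
    simp
  have h2 : (2 * (π : ℂ) / β) ^ ((1 : ℂ) / 2) =
      ((1 / Real.sqrt (2 * π) : ℝ):ℂ) * ((4 * (π : ℂ) ^ 2) / β) ^ ((1 : ℂ) / 2) := by
    have e : 2 * (π : ℂ) / β = ((1 / (2 * π) : ℝ):ℂ) * ((4 * (π : ℂ) ^ 2) / β) := by
      have : (π:ℂ) ≠ 0 := by exact_mod_cast hπ.ne'
      push_cast; field_simp; ring
    rw [e, sqrt_scale _ (by positivity), one_div (2 * π), Real.sqrt_inv, one_div (√(2 * π))]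
  rw [h1, h2]
  have h3 : Real.sqrt 2 / (2 * π) * Real.sqrt π = 1 / Real.sqrt (2 * π) := by
    rw [Real.sqrt_mul (by norm_num)]
    have p2 : 0 < Real.sqrt π := by positivity
    have s1 := Real.sq_sqrt hπ.le
    have s2 := Real.sq_sqrt (show (0:ℝ) ≤ 2 by norm_num)
    field_simp
    rw [s1, s2]
  rw [← h3]
  push_cast
  ring

/-- Exact change of variables. -/
lemma Fvac_eq (A : ℝ) (hA : 0 < A) (β : ℂ) (J : ℤ) (hJ : 0 < J) (x : ℝ)
    (hx : x = (Real.sqrt (2 * π * Real.sqrt (A * (J : ℝ))))⁻¹) :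
    ((Real.sqrt (2 * (J : ℝ)) * Real.exp (-(4 * π * Real.sqrt (A * (J : ℝ)))) : ℝ) : ℂ) *
          Fvac A β J = ((Real.sqrt 2 / (2 * π) : ℝ) : ℂ) *
       ∫ u in (-(π / (4 * π^2 * A * x^3)))..(π / (4 * π^2 * A * x^3)), Hres (4 * π^2 * A) β x u := by
  have hπ := pi_pos
  have hJr : (0:ℝ) < J := by exact_mod_cast hJ
  have hx0 : 0 < x := by rw [hx]; positivity
  have hM : 2 * π * Real.sqrt (A * (J : ℝ)) = (x^2)⁻¹ := by
    rw [hx, inv_pow, inv_inv, Real.sq_sqrt (by positivity)]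
  set a := 4 * π^2 * A with ha
  have ha0 : 0 < a := by positivity
  have hJx : (J:ℝ) = (a * x^4)⁻¹ := by
    have h1 : (2 * π * Real.sqrt (A * (J : ℝ)))^2 = ((x^2)⁻¹)^2 := by rw [hM]
    rw [mul_pow, Real.sq_sqrt (by positivity)] at h1
    have : a * J = (x^4)⁻¹ := by rw [ha]; rw [← inv_pow] at h1; rw [← inv_pow]; linear_combination h1
    rw [mul_inv, ← this]; field_simp
  have hα : 2 * π * Real.sqrt (A / (J : ℝ)) = a * x^2 := by
    have : A / J = (a * x^2 / (2 * π))^2 := by rw [hJx, ha]; field_simp; ring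
    rw [this, Real.sqrt_sq (by positivity)]; field_simp
  have h2J : Real.sqrt (2 * (J:ℝ)) = Real.sqrt 2 / (Real.sqrt a * x^2) := by
    have : 2 * (J:ℝ) = (Real.sqrt 2 / (Real.sqrt a * x^2))^2 := by
      rw [hJx, div_pow, mul_pow, Real.sq_sqrt ha0.le, Real.sq_sqrt (by norm_num)]; field_simp
    rw [this, Real.sqrt_sq (by positivity)]
  have hc : 0 < a * x^3 := by positivity
  unfold Fvac
  have hb : ∀ f : ℝ → ℂ, ∫ t in (-π)..π, f t =
      (a * x^3) • ∫ u in (-(π / (a * x^3)))..(π / (a * x^3)), f (u * (a * x^3)) := by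
    intro f
    rw [intervalIntegral.smul_integral_comp_mul_right]
    congr 1 <;> field_simp
  rw [hb, Complex.real_smul, ← intervalIntegral.integral_const_mul,
    ← intervalIntegral.integral_const_mul, ← intervalIntegral.integral_const_mul]
  congr 1
  ext u
  set q : ℂ := 1 + (u * x : ℝ) * Complex.I with hq
  have hq0 : q ≠ 0 := q_ne _
  have hz : zline A J (u * (a * x^3)) = a * x^2 * q := by
    unfold zline
    rw [hα, hq]; push_cast; ring
  rw [hz]
  unfold Hres
  rw [← hq]
  have hxc : (x:ℂ) ≠ 0 := by exact_mod_cast hx0.ne'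
  have hac : (a:ℂ) ≠ 0 := by exact_mod_cast ha0.ne'
  have hJc : (J:ℂ) = ((a:ℂ) * (x:ℂ)^4)⁻¹ := by
    have := congrArg (fun r : ℝ => (r:ℂ)) hJx
    push_cast at this; exact this
  have haA : (4 * (π : ℂ) ^ 2 * (A : ℂ)) = a := by rw [ha]; push_cast; ring
  rw [haA]
  have hs : ((4 * (π : ℂ) ^ 2) / (a * x^2 * q * (β - a * x^2 * q))) ^ ((1 : ℂ) / 2)
      = (((Real.sqrt a * x)⁻¹ : ℝ):ℂ) * ((4 * (π : ℂ) ^ 2) / (q * (β - a * x^2 * q))) ^ ((1 : ℂ) / 2) := by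
    have h1 : Real.sqrt ((a * x^2)⁻¹) = (Real.sqrt a * x)⁻¹ := by
      rw [Real.sqrt_inv, Real.sqrt_mul ha0.le, Real.sqrt_sq hx0.le]
    rw [← h1, ← sqrt_scale _ (by positivity)]
    congr 1
    push_cast
    rw [div_eq_mul_inv, div_eq_mul_inv, mul_assoc (a * x^2 : ℂ), mul_inv (a * x^2 : ℂ)]
    ring
  have he : Complex.exp (a * x^2 * q * J) * Complex.exp (a / (β - a * x^2 * q) + a / (a * x^2 * q))
      = Complex.exp (4 * π * Real.sqrt (A * (J : ℝ)) : ℝ) * (Complex.exp (-(u:ℂ)^2 / q) * Complex.exp (a / (β - a * x^2 * q))) := by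
    rw [← Complex.exp_add, ← Complex.exp_add, ← Complex.exp_add]
    congr 1
    have h1 : 4 * π * Real.sqrt (A * (J : ℝ)) = 2 * (x^2)⁻¹ := by rw [← hM]; ring
    rw [h1, hJc]
    have h2 : (a * x^2 * q * ((a:ℂ) * (x:ℂ)^4)⁻¹ : ℂ) + a / (a * x^2 * q) = 2 * ((x:ℂ)^2)⁻¹ + -(u:ℂ)^2 / q := by
      have : (u:ℂ)^2 * x^2 = - (q - 1)^2 := by
        rw [hq]; push_cast; ring_nf; simp
      field_simp
      linear_combination this
    push_cast
    linear_combination h2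
  rw [hs, h2J, Complex.real_smul]
  have hee : ((Real.exp (-(4 * π * Real.sqrt (A * (J : ℝ)))) : ℝ):ℂ) * Complex.exp (4 * π * Real.sqrt (A * (J : ℝ)) : ℝ) = 1 := by
    rw [Complex.ofReal_exp, ← Complex.exp_add]; simp
  generalize Complex.exp (4 * π * Real.sqrt (A * (J : ℝ)) : ℝ) = P at he hee
  generalize Real.exp (-(4 * π * Real.sqrt (A * (J : ℝ)))) = N at hee ⊢
  generalize Complex.exp (a * x^2 * q * J) = E1 at he ⊢
  generalize Complex.exp (a / (β - a * x^2 * q) + a / (a * x^2 * q)) = E2 at he ⊢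
  generalize Complex.exp (-(u:ℂ)^2 / q) = E3 at he ⊢
  generalize Complex.exp (a / (β - a * x^2 * q)) = E4 at he ⊢
  generalize ((4 * (π : ℂ) ^ 2) / (q * (β - a * x^2 * q))) ^ ((1 : ℂ) / 2) = S
  generalize (1 - Complex.exp (-(4 * (π : ℂ) ^ 2) / (β - a * x^2 * q))) = T1
  generalize (1 - Complex.exp (-(4 * (π : ℂ) ^ 2) / (a * x^2 * q))) = T2
  have hk : Real.sqrt 2 / (Real.sqrt a * x^2) * (a * x^3) * (1 / (2 * π)) * (Real.sqrt a * x)⁻¹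
      = Real.sqrt 2 / (2 * π) := by
    have h1 := Real.sq_sqrt ha0.le
    have h2 : 0 < Real.sqrt a := Real.sqrt_pos.2 ha0
    generalize Real.sqrt a = r at h1 h2
    rw [← h1]
    field_simp
  have hkc := congrArg (fun r : ℝ => (r:ℂ)) hk
  simp only [Complex.ofReal_mul] at hkc
  rw [← hkc, Complex.ofReal_mul]
  generalize ((Real.sqrt 2 / (Real.sqrt a * x^2) : ℝ):ℂ) = c1
  generalize (((Real.sqrt a * x)⁻¹ : ℝ):ℂ) = c2
  simp only [Complex.ofReal_mul]
  linear_combination (c1 * ((a:ℂ) * ((x^3 : ℝ):ℂ)) * (1 / (2 * π) : ℝ) * c2 * S * T1 * T2) * (N * he + E3 * E4 * hee)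

/-- Lemma (saddle point limit of the vacuum term): for fixed `β_L` with `Re β_L > 0`,
`√(2J) e^(-4π√(AJ)) F_vac(β_L, J) → √(2π/β_L) e^(4π²A/β_L) (1 - e^(-4π²/β_L))`. -/
theorem Fvac_limit
    (A : ℝ) (hA : 0 < A) (βL : ℂ) (hβL : 0 < βL.re) :
    Tendsto
      (fun J : ℤ =>
        ((Real.sqrt (2 * (J : ℝ)) * Real.exp (-(4 * π * Real.sqrt (A * (J : ℝ)))) : ℝ) : ℂ) *
          Fvac A βL J)
      atTop
      (𝓝 ((2 * (π : ℂ) / βL) ^ ((1 : ℂ) / 2) * Complex.exp (4 * (π : ℂ) ^ 2 * (A : ℂ) / βL) *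
        (1 - Complex.exp (-(4 * (π : ℂ) ^ 2) / βL)))) := by
  have hπ := pi_pos
  have ha : 0 < 4 * π^2 * A := by positivity
  have h := (main_tendsto _ ha βL hβL).const_mul ((Real.sqrt 2 / (2 * π) : ℝ) : ℂ)
  rw [limit_value] at h
  have hx : Tendsto (fun J : ℤ => (Real.sqrt (2 * π * Real.sqrt (A * (J : ℝ))))⁻¹) atTop (𝓝[>] 0) := by
    apply tendsto_inv_atTop_nhdsGT_zero.comp
    apply Real.tendsto_sqrt_atTop.comp
    apply Tendsto.const_mul_atTop (by positivity)
    apply Real.tendsto_sqrt_atTop.comp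
    exact Tendsto.const_mul_atTop hA tendsto_intCast_atTop_atTop
  have h2 := h.comp hx
  have e : (((4 * π^2 * A : ℝ)) : ℂ) = 4 * (π : ℂ) ^ 2 * (A : ℂ) := by push_cast; ring
  rw [e] at h2
  refine h2.congr' ?_
  filter_upwards [eventually_gt_atTop 0] with J hJ
  rw [Fvac_eq A hA βL J hJ _ rfl]
  rfl
end
end

section
/- Let (ν_J)_{J∈ℤ} be a spectrum (modular invariance is not assumed). Then for every complex β_L with Re(β_L) > 0, every real α with 0 < α < Re(β_L), and every integer J with |J| ≥ 2, F(β_L, J) = ∫_{−π}^{π} (dt/2π) e^{(α + i·t)·J} · Z̃(β_L − α − i·t, α + i·t). -/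
open MeasureTheory Filter Topology Real

noncomputable section

/-- A spectrum: a family of positive Borel measures on `ℝ`, each supported in
`{h | Tgap < h ∧ Tgap < h + J}`, with finite total Laplace-type sum. -/
def IsSpectrum (Tgap : ℝ) (ν : ℤ → Measure ℝ) : Prop :=
  (∀ J : ℤ, ν J {h : ℝ | ¬ (Tgap < h ∧ Tgap < h + (J : ℝ))} = 0) ∧
  (∀ b b' : ℝ, 0 < b → 0 < b' →
    (∑' J : ℤ, ∫⁻ h : ℝ, ENNReal.ofReal (Real.exp (-b * h - b' * (h + (J : ℝ)))) ∂(ν J)) < ⊤)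

/-- The reduced (Virasoro primary) partition function. -/
def Ztilde (A : ℝ) (ν : ℤ → Measure ℝ) (βL βR : ℂ) : ℂ :=
  Complex.exp ((A : ℂ) * (βL + βR)) *
    ((1 - Complex.exp (-βL)) * (1 - Complex.exp (-βR)) +
      ∑' J : ℤ, ∫ h : ℝ, Complex.exp (-βL * (h : ℂ) - βR * ((h : ℂ) + (J : ℂ))) ∂(ν J))

/-- Modular invariance of the reduced partition function (principal square root). -/
def ModularInvariant (A : ℝ) (ν : ℤ → Measure ℝ) : Prop :=
  ∀ βL βR : ℂ, 0 < βL.re → 0 < βR.re →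
    Ztilde A ν βL βR =
      ((4 * (π : ℂ) ^ 2) / (βL * βR)) ^ ((1 : ℂ) / 2) *
        Ztilde A ν (4 * (π : ℂ) ^ 2 / βL) (4 * (π : ℂ) ^ 2 / βR)

/-- The Laplace transform `F(β_L, J)` of the spin-`J` spectral measure. -/
def Fgen (A : ℝ) (ν : ℤ → Measure ℝ) (βL : ℂ) (J : ℤ) : ℂ :=
  ∫ h : ℝ, Complex.exp (-βL * ((h : ℂ) - (A : ℂ))) ∂(ν J)

theorem integral_exp_contour_of_ne (α : ℝ) (n : ℤ) (hn : n ≠ 0) :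
    ∫ t in (-π)..π, Complex.exp (((α : ℂ) + (t : ℂ) * Complex.I) * (n : ℂ)) = 0 := by
  have hc : Complex.I * (n : ℂ) ≠ 0 :=
    mul_ne_zero Complex.I_ne_zero (Int.cast_ne_zero.mpr hn)
  have h1 : ∀ t : ℝ, Complex.exp (((α : ℂ) + (t : ℂ) * Complex.I) * (n : ℂ)) =
      Complex.exp ((α : ℂ) * n) * Complex.exp ((Complex.I * (n : ℂ)) * t) := by
    intro t
    rw [← Complex.exp_add]
    congr 1
    ring
  simp_rw [h1]
  rw [intervalIntegral.integral_const_mul, integral_exp_mul_complex hc]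
  have h2 : Complex.exp (Complex.I * (n : ℂ) * ((π : ℝ) : ℂ)) =
      Complex.exp (Complex.I * (n : ℂ) * ((-π : ℝ) : ℂ)) := by
    rw [Complex.exp_eq_exp_iff_exists_int]
    refine ⟨n, ?_⟩
    push_cast
    ring
  rw [h2]
  simp

/-- The contour-integral representation of `F(β_L, J)` in terms of the reduced partition
function, valid for `0 < α < Re β_L` and `|J| ≥ 2`. -/
theorem F_contour_representation
    (A Tgap : ℝ) (hA : 0 < A) (hTgap : 0 < Tgap)
    (ν : ℤ → Measure ℝ) (hspec : IsSpectrum Tgap ν)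
    (βL : ℂ) (hβL : 0 < βL.re) (α : ℝ) (hα : 0 < α) (hα' : α < βL.re)
    (J : ℤ) (hJ : 2 ≤ |J|) :
    Fgen A ν βL J =
      ∫ t in (-π)..π, (1 / (2 * π) : ℝ) •
        (Complex.exp (((α : ℂ) + (t : ℂ) * Complex.I) * (J : ℂ)) *
          Ztilde A ν (βL - (α : ℂ) - (t : ℂ) * Complex.I) ((α : ℂ) + (t : ℂ) * Complex.I)) := by
  set G : ℤ → ℂ := fun K => ∫ h : ℝ, Complex.exp (-βL * (h : ℂ)) ∂(ν K) with hG
  set E : ℤ → ℝ → ℂ :=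
    fun n t => Complex.exp (((α : ℂ) + (t : ℂ) * Complex.I) * (n : ℂ)) with hE
  have hEcont : ∀ n, Continuous (E n) := fun n => by simp only [hE]; fun_prop
  have hE0 : ∀ n, n ≠ 0 → ∫ t in (-π)..π, E n t = 0 := fun n hn =>
    integral_exp_contour_of_ne α n hn
  have hEadd : ∀ m n t, E (m + n) t = E m t * E n t := by
    intro m n t
    simp only [hE]
    rw [← Complex.exp_add]
    congr 1
    push_cast
    ring
  have hEnorm : ∀ n t, ‖E n t‖ = Real.exp (α * n) := by
    intro n t
    simp only [hE]
    rw [Complex.norm_exp]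
    congr 1
    simp
  -- the twisted integrals
  have hint : ∀ (K : ℤ) (t : ℝ), ∫ h : ℝ, Complex.exp
      (-(βL - (α : ℂ) - (t : ℂ) * Complex.I) * (h : ℂ) -
        ((α : ℂ) + (t : ℂ) * Complex.I) * ((h : ℂ) + (K : ℂ))) ∂(ν K) = E (-K) t * G K := by
    intro K t
    simp only [hG, hE]
    rw [← integral_const_mul]
    congr 1
    ext h
    rw [← Complex.exp_add]
    congr 1
    push_cast
    ring
  set B : ℤ → ℝ := fun K => (∫⁻ h : ℝ, ENNReal.ofReal
    (Real.exp (-(βL.re - α) * h - α * (h + (K : ℝ)))) ∂(ν K)).toReal with hB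
  have hBsum : Summable B :=
    ENNReal.summable_toReal (hspec.2 (βL.re - α) α (by linarith) hα).ne
  have hbd : ∀ (K : ℤ) (t : ℝ), ‖E (-K) t * G K‖ ≤ B K := by
    intro K t
    rw [← hint K t]
    refine (norm_integral_le_lintegral_norm _).trans (le_of_eq ?_)
    simp only [hB]
    congr 2
    ext h
    rw [Complex.norm_exp]
    congr 2
    simp
  have hsumE : ∀ t, Summable fun K => E (-K) t * G K := fun t =>
    Summable.of_norm_bounded hBsum (fun K => hbd K t)
  have hsum1 : ∀ t, HasSum (fun K => E (J - K) t * G K) (E J t * ∑' K, E (-K) t * G K) := by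
    intro t
    have := (hsumE t).hasSum.mul_left (E J t)
    refine this.congr_fun ?_
    intro K
    rw [sub_eq_add_neg, hEadd, mul_assoc]
  have hswap : HasSum (fun K => ∫ t in (-π)..π, E (J - K) t * G K)
      (∫ t in (-π)..π, E J t * ∑' K, E (-K) t * G K) := by
    refine intervalIntegral.hasSum_integral_of_dominated_convergence
      (fun K _ => Real.exp (α * J) * B K) (fun K => ?_) (fun K => ?_) ?_ ?_ ?_
    · exact ((hEcont _).mul continuous_const).aestronglyMeasurable
    · refine Eventually.of_forall fun t _ => ?_
      rw [sub_eq_add_neg, hEadd, mul_assoc, norm_mul, hEnorm]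
      exact mul_le_mul_of_nonneg_left (hbd K t) (Real.exp_pos _).le
    · exact Eventually.of_forall fun t _ => hBsum.mul_left _
    · exact intervalIntegrable_const
    · exact Eventually.of_forall fun t _ => hsum1 t
  have hval : ∫ t in (-π)..π, E J t * ∑' K, E (-K) t * G K = (2 * π : ℝ) * G J := by
    refine hswap.unique ?_
    convert hasSum_single J ?_ using 1
    · simp only [sub_self, hE]
      simp
      left
      ring
    · intro K hK
      rw [intervalIntegral.integral_mul_const, hE0 _ (sub_ne_zero.mpr hK.symm), zero_mul]
  have hSint : IntervalIntegrable (fun t => E J t * ∑' K, E (-K) t * G K) volume (-π) π := by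
    have hc : Continuous fun t => E J t * ∑' K, E (-K) t * G K :=
      (hEcont J).mul (continuous_tsum (fun K => (hEcont _).mul continuous_const) hBsum hbd)
    exact hc.intervalIntegrable _ _
  have hJ0 : J ≠ 0 := by rintro rfl; simp at hJ
  have hJ1 : J + 1 ≠ 0 := by
    intro h
    obtain rfl : J = -1 := by omega
    simp at hJ
  have hJ2 : J + -1 ≠ 0 := by
    intro h
    obtain rfl : J = 1 := by omega
    simp at hJ
  have hpt : ∀ t : ℝ, (1 / (2 * π) : ℝ) •
        (Complex.exp (((α : ℂ) + (t : ℂ) * Complex.I) * (J : ℂ)) *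
          Ztilde A ν (βL - (α : ℂ) - (t : ℂ) * Complex.I) ((α : ℂ) + (t : ℂ) * Complex.I)) =
      (((1 / (2 * π) : ℝ) : ℂ) * Complex.exp (A * βL)) *
        (((1 + Complex.exp (-βL)) * E J t - E (J + -1) t - Complex.exp (-βL) * E (J + 1) t) +
          E J t * ∑' K, E (-K) t * G K) := by
    intro t
    have e1 : Complex.exp (-(βL - (α : ℂ) - (t : ℂ) * Complex.I)) =
        Complex.exp (-βL) * E 1 t := by
      simp only [hE]
      rw [← Complex.exp_add]
      congr 1
      push_cast
      ring
    have e2 : Complex.exp (-((α : ℂ) + (t : ℂ) * Complex.I)) = E (-1) t := by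
      simp only [hE]
      congr 1
      push_cast
      ring
    have e3 : E 1 t * E (-1) t = 1 := by
      rw [← hEadd]
      simp [hE]
    have e4 : (A : ℂ) * (βL - (α : ℂ) - (t : ℂ) * Complex.I +
        ((α : ℂ) + (t : ℂ) * Complex.I)) = A * βL := by ring
    have e5 : Complex.exp (((α : ℂ) + (t : ℂ) * Complex.I) * (J : ℂ)) = E J t := rfl
    unfold Ztilde
    simp only [hint]
    rw [e1, e2, e4, e5, Complex.real_smul, hEadd, hEadd]
    linear_combination (((1 / (2 * π) : ℝ) : ℂ) * Complex.exp (A * βL)) * E J t *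
      Complex.exp (-βL) * e3
  have hi : ∀ (c : ℂ) n, IntervalIntegrable (fun t => c * E n t) volume (-π) π := fun c n =>
    (continuous_const.mul (hEcont n)).intervalIntegrable _ _
  have hi' : ∀ n, IntervalIntegrable (fun t => E n t) volume (-π) π := fun n =>
    (hEcont n).intervalIntegrable _ _
  simp_rw [hpt]
  rw [intervalIntegral.integral_const_mul, intervalIntegral.integral_add
    (((hi _ _).sub (hi' _)).sub (hi _ _)) hSint, intervalIntegral.integral_sub
    ((hi _ _).sub (hi' _)) (hi _ _), intervalIntegral.integral_sub (hi _ _) (hi' _),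
    intervalIntegral.integral_const_mul, intervalIntegral.integral_const_mul,
    hE0 _ hJ0, hE0 _ hJ1, hE0 _ hJ2, hval]
  have hF : Fgen A ν βL J = Complex.exp (A * βL) * G J := by
    simp only [Fgen, hG]
    rw [← integral_const_mul]
    congr 1
    ext h
    rw [← Complex.exp_add]
    congr 1
    ring
  rw [hF]
  have hpi : (π : ℂ) ≠ 0 := by exact_mod_cast Real.pi_ne_zero
  push_cast
  field_simp
  ring
end
end

section
/- Fix A > 0. For every complex β_L with Re(β_L) > 0, e^{A·β_L} · ∫_A^∞ ρ_c(h) · e^{−β_L·h} dh = √(2π/β_L) · e^{4π²A/β_L} · (1 − e^{−4π²/β_L}), where the square root is the principal branch; in particular the integral on the left converges absolutely. -/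
open MeasureTheory Filter Topology Real

noncomputable section

lemma gauss_cosh_s15 (b : ℂ) (hb : 0 < b.re) (c : ℂ) :
    IntegrableOn (fun x : ℝ => Complex.cosh (c * x) * Complex.exp (-b * (x : ℂ) ^ 2))
      (Set.Ioi 0) ∧
    ∫ x in Set.Ioi (0 : ℝ), Complex.cosh (c * x) * Complex.exp (-b * (x : ℂ) ^ 2) =
      1 / 2 * ((π / b) ^ (1 / 2 : ℂ) * Complex.exp (c ^ 2 / (4 * b))) := by
  have h1 := integrable_cexp_quadratic hb c 0
  have h2 := integrable_cexp_quadratic hb (-c) 0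
  have e : (fun x : ℝ => Complex.cosh (c * x) * Complex.exp (-b * (x : ℂ) ^ 2)) =
      fun x : ℝ => 1 / 2 * (Complex.exp (-b * (x : ℂ) ^ 2 + c * x + 0) +
        Complex.exp (-b * (x : ℂ) ^ 2 + (-c) * x + 0)) := by
    funext x
    rw [Complex.cosh, add_zero, add_zero, Complex.exp_add, Complex.exp_add, neg_mul c]
    ring
  rw [e]
  refine ⟨((h1.add h2).const_mul _).integrableOn, ?_⟩
  rw [integral_const_mul, integral_add h1.integrableOn h2.integrableOn]
  have h3 : ∫ x in Set.Ioi (0 : ℝ), Complex.exp (-b * (x : ℂ) ^ 2 + (-c) * x + 0) =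
      ∫ x in Set.Iic (0 : ℝ), Complex.exp (-b * (x : ℂ) ^ 2 + c * x + 0) := by
    have := integral_comp_neg_Ioi 0
      (fun x : ℝ => Complex.exp (-b * (x : ℂ) ^ 2 + c * x + 0))
    rw [neg_zero] at this
    rw [← this]
    congr 1
    funext x
    push_cast
    congr 1
    ring
  have h4 := integral_cexp_quadratic (b := -b) (by simpa using hb) c 0
  rw [h3, add_comm, ← Set.compl_Ioi, add_comm, integral_add_compl measurableSet_Ioi h1, h4,
    neg_neg]
  congr 3
  rw [mul_neg, div_neg]
  ring

lemma rhoc_subst (A : ℝ) (hA : 0 < A) : ∃ c d : ℂ, c ^ 2 = 16 * π ^ 2 * A ∧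
    d ^ 2 = 16 * π ^ 2 * (A - 1) ∧ ∀ x : ℝ, 0 < x →
      ((2 * x * rhoc A (A + x ^ 2) : ℝ) : ℂ) =
        2 * (2 : ℂ) ^ (1 / 2 : ℂ) * (Complex.cosh (c * x) - Complex.cosh (d * x)) := by
  have s2 : (2 : ℂ) ^ (1 / 2 : ℂ) = ((√2 : ℝ) : ℂ) := by
    rw [Real.sqrt_eq_rpow, Complex.ofReal_cpow (by norm_num)]
    norm_num
  have key : ∀ x : ℝ, 0 < x → ∀ y : ℝ, 0 ≤ y → √(y * x ^ 2) = √y * x := by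
    intro x hx y hy
    rw [Real.sqrt_mul hy, Real.sqrt_sq hx.le]
  have pre : ∀ x : ℝ, 0 < x → 2 * x * √(2 / x ^ 2) = 2 * √2 := by
    intro x hx
    rw [Real.sqrt_div (by norm_num), Real.sqrt_sq hx.le]
    field_simp
  have hc : ((4 * π * √A : ℝ) : ℂ) ^ 2 = 16 * π ^ 2 * A := by
    rw [← Complex.ofReal_pow, mul_pow, Real.sq_sqrt hA.le]
    push_cast
    ring
  by_cases h1 : 1 ≤ A
  · refine ⟨((4 * π * √A : ℝ) : ℂ), ((4 * π * √(A - 1) : ℝ) : ℂ), hc, ?_, ?_⟩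
    · rw [← Complex.ofReal_pow, mul_pow, Real.sq_sqrt (by linarith)]
      push_cast
      ring
    · intro x hx
      have hn : ¬ (A + x ^ 2 ≤ A) := by have := pow_pos hx 2; linarith
      rw [rhoc, if_neg hn, if_pos h1, add_sub_cancel_left, ← mul_assoc, pre x hx,
        key x hx A hA.le, key x hx (A - 1) (by linarith), s2, ← mul_assoc, ← mul_assoc]
      push_cast
      rfl
  · refine ⟨((4 * π * √A : ℝ) : ℂ), ((4 * π * √(1 - A) : ℝ) : ℂ) * Complex.I, hc, ?_, ?_⟩
    · rw [mul_pow, Complex.I_sq, ← Complex.ofReal_pow, mul_pow, Real.sq_sqrt (by linarith)]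
      push_cast
      ring
    · intro x hx
      have hn : ¬ (A + x ^ 2 ≤ A) := by have := pow_pos hx 2; linarith
      rw [rhoc, if_neg hn, if_neg h1, add_sub_cancel_left, ← mul_assoc, pre x hx,
        key x hx A hA.le, key x hx (1 - A) (by linarith), s2, ← mul_assoc, ← mul_assoc,
        mul_right_comm _ Complex.I, Complex.cosh_mul_I]
      push_cast
      rfl

/-- The Laplace transform of `ρ_c`: for `Re β_L > 0`,
`e^(Aβ_L) ∫_A^∞ ρ_c(h) e^(-β_L h) dh = √(2π/β_L) e^(4π²A/β_L) (1 - e^(-4π²/β_L))`,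
and the integral converges absolutely. -/
theorem rhoc_laplace_transform
    (A : ℝ) (hA : 0 < A) (βL : ℂ) (hβL : 0 < βL.re) :
    IntegrableOn (fun h : ℝ => ((rhoc A h : ℝ) : ℂ) * Complex.exp (-βL * (h : ℂ)))
      (Set.Ioi A) ∧
    Complex.exp ((A : ℂ) * βL) *
        (∫ h in Set.Ioi A, ((rhoc A h : ℝ) : ℂ) * Complex.exp (-βL * (h : ℂ))) =
      (2 * (π : ℂ) / βL) ^ ((1 : ℂ) / 2) * Complex.exp (4 * (π : ℂ) ^ 2 * (A : ℂ) / βL) *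
        (1 - Complex.exp (-(4 * (π : ℂ) ^ 2) / βL)) := by
  obtain ⟨c, d, hc, hd, H⟩ := rhoc_subst A hA
  have hb0 : βL ≠ 0 := by
    rintro rfl
    simp at hβL
  obtain ⟨ic, vc⟩ := gauss_cosh_s15 βL hβL c
  obtain ⟨id, vd⟩ := gauss_cosh_s15 βL hβL d
  have him : (fun x : ℝ => A + x ^ 2) '' Set.Ioi 0 = Set.Ioi A := by
    ext y
    simp only [Set.mem_image, Set.mem_Ioi]
    constructor
    · rintro ⟨x, hx, rfl⟩
      have := pow_pos hx 2
      linarith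
    · intro hy
      exact ⟨√(y - A), Real.sqrt_pos.2 (by linarith), by
        rw [Real.sq_sqrt (by linarith)]; ring⟩
  have hder : ∀ x ∈ Set.Ioi (0 : ℝ),
      HasDerivWithinAt (fun x : ℝ => A + x ^ 2) (2 * x) (Set.Ioi 0) x := by
    intro x _
    simpa using ((hasDerivAt_pow 2 x).const_add A).hasDerivWithinAt
  have hinj : Set.InjOn (fun x : ℝ => A + x ^ 2) (Set.Ioi 0) := by
    intro x hx y hy hxy
    have : x ^ 2 = y ^ 2 := by simpa using hxy
    exact (pow_left_inj₀ (le_of_lt hx) (le_of_lt hy) two_ne_zero).1 this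
  have heq : Set.EqOn (fun x : ℝ => |2 * x| • (((rhoc A (A + x ^ 2) : ℝ) : ℂ) *
        Complex.exp (-βL * ((A + x ^ 2 : ℝ) : ℂ))))
      (fun x : ℝ => (2 * (2 : ℂ) ^ (1 / 2 : ℂ) * Complex.exp (-βL * A)) *
        (Complex.cosh (c * x) * Complex.exp (-βL * (x : ℂ) ^ 2) -
          Complex.cosh (d * x) * Complex.exp (-βL * (x : ℂ) ^ 2))) (Set.Ioi 0) := by
    intro x hx
    have hx' : 0 < x := hx
    have hH := H x hx'
    have e : Complex.exp (-βL * ((A + x ^ 2 : ℝ) : ℂ)) =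
        Complex.exp (-βL * A) * Complex.exp (-βL * (x : ℂ) ^ 2) := by
      rw [← Complex.exp_add]
      push_cast
      ring_nf
    simp only
    rw [abs_of_pos (by linarith), Complex.real_smul, ← mul_assoc, ← Complex.ofReal_mul, hH, e]
    ring
  have hsub := ic.sub id
  constructor
  · rw [← him, integrableOn_image_iff_integrableOn_abs_deriv_smul measurableSet_Ioi hder hinj,
      integrableOn_congr_fun heq measurableSet_Ioi]
    exact hsub.const_mul _
  · rw [← him, integral_image_eq_integral_abs_deriv_smul measurableSet_Ioi hder hinj,
      setIntegral_congr_fun measurableSet_Ioi heq, integral_const_mul, integral_sub ic id,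
      vc, vd, hc, hd]
    have e1 : (2 * (π : ℂ) / βL) ^ ((1 : ℂ) / 2) =
        (2 : ℂ) ^ (1 / 2 : ℂ) * (π / βL) ^ (1 / 2 : ℂ) := by
      rw [mul_div_assoc]
      have hx : (π : ℂ) / βL ≠ 0 :=
        div_ne_zero (Complex.ofReal_ne_zero.2 Real.pi_ne_zero) hb0
      have hl := Complex.log_ofReal_mul (r := 2) (by norm_num) hx
      rw [Complex.ofReal_log (by norm_num), Complex.ofReal_ofNat] at hl
      rw [Complex.cpow_def_of_ne_zero (mul_ne_zero two_ne_zero hx),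
        Complex.cpow_def_of_ne_zero two_ne_zero, Complex.cpow_def_of_ne_zero hx, hl, add_mul,
        Complex.exp_add]
    have e2 : Complex.exp ((A : ℂ) * βL) * Complex.exp (-βL * A) = 1 := by
      rw [← Complex.exp_add, ← Complex.exp_zero]
      ring_nf
    have e3 : Complex.exp (16 * (π : ℂ) ^ 2 * A / (4 * βL)) =
        Complex.exp (4 * (π : ℂ) ^ 2 * (A : ℂ) / βL) := by
      congr 1
      field_simp
      ring
    have e4 : Complex.exp (16 * (π : ℂ) ^ 2 * (A - 1) / (4 * βL)) =
        Complex.exp (4 * (π : ℂ) ^ 2 * (A : ℂ) / βL) * Complex.exp (-(4 * (π : ℂ) ^ 2) / βL) := by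
      rw [← Complex.exp_add]
      congr 1
      field_simp
      ring
    rw [e1, e3, e4]
    linear_combination ((2 : ℂ) ^ (1 / 2 : ℂ) * (π / βL) ^ (1 / 2 : ℂ) *
      Complex.exp (4 * (π : ℂ) ^ 2 * (A : ℂ) / βL) *
        (1 - Complex.exp (-(4 * (π : ℂ) ^ 2) / βL))) * e2
end
end

section
/- Fix A > 0. Then lim_{α→0⁺} 4π^{3/2}·√A · α^{−3/2} · e^{−4π²A/α} · ∫_{−π}^{π} (dt/2π) e^{4π²·A·α/(α² + t²)} = 1; that is, ∫_{−π}^{π} (dt/2π) e^{4π²Aα/(α²+t²)} is asymptotic to (α^{3/2}/(4π^{3/2}√A))·e^{4π²A/α} as α → 0⁺. -/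
open MeasureTheory Filter Topology Real

noncomputable section

/-- Rescaled integrand bound. -/
lemma spia_bound (B : ℝ) (hB : 0 < B) (a s : ℝ) (ha : 0 < a) (ha1 : a < 1)
    (hs : a ^ 3 * s ^ 2 ≤ π ^ 2) :
    Real.exp (-(B * s ^ 2 / (1 + a * s ^ 2))) ≤
      Real.exp (-(B / 2) * s ^ 2) + (96 * π ^ 2 / B ^ 3) * (1 + s ^ 2)⁻¹ := by
  have hs0 : 0 ≤ s ^ 2 := sq_nonneg s
  have hden : 0 < 1 + a * s ^ 2 := by positivity
  rcases le_or_gt (a * s ^ 2) 1 with h | h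
  · have h1 : Real.exp (-(B * s ^ 2 / (1 + a * s ^ 2))) ≤ Real.exp (-(B / 2) * s ^ 2) := by
      apply Real.exp_le_exp.mpr
      have : B / 2 * s ^ 2 ≤ B * s ^ 2 / (1 + a * s ^ 2) := by
        rw [le_div_iff₀ hden]
        have : 0 ≤ B * s ^ 2 := by positivity
        nlinarith
      linarith
    have : 0 ≤ (96 * π ^ 2 / B ^ 3) * (1 + s ^ 2)⁻¹ := by positivity
    linarith
  · have hs1 : 1 < s ^ 2 := by nlinarith
    set x := B / (2 * a) with hx
    have hx0 : 0 < x := by positivity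
    have h1 : Real.exp (-(B * s ^ 2 / (1 + a * s ^ 2))) ≤ Real.exp (-x) := by
      apply Real.exp_le_exp.mpr
      have : x ≤ B * s ^ 2 / (1 + a * s ^ 2) := by
        rw [hx, div_le_div_iff₀ (by positivity) hden]
        nlinarith
      linarith
    have h2 : Real.exp (-x) ≤ 6 / x ^ 3 := by
      have h3 := Real.pow_div_factorial_le_exp x hx0.le 3
      have h4 : ((Nat.factorial 3 : ℕ) : ℝ) = 6 := by norm_num [Nat.factorial]
      rw [h4] at h3
      rw [Real.exp_neg, inv_le_comm₀ (Real.exp_pos _) (by positivity), inv_div]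
      exact h3
    have h5 : 6 / x ^ 3 ≤ (96 * π ^ 2 / B ^ 3) * (1 + s ^ 2)⁻¹ := by
      have e : 6 / x ^ 3 = 48 * a ^ 3 / B ^ 3 := by
        rw [hx]; field_simp; norm_num
      rw [e, ← div_eq_mul_inv, le_div_iff₀ (by positivity), div_mul_eq_mul_div]
      apply div_le_div_of_nonneg_right _ (by positivity)
      have : 0 < a ^ 3 := by positivity
      nlinarith
    have := Real.exp_pos (-(B / 2) * s ^ 2)
    linarith

lemma spia_lim (B : ℝ) (hB : 0 < B) :
    Tendsto (fun a : ℝ => ∫ s : ℝ,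
      (Set.Ioc (-π / a ^ (3 / 2 : ℝ)) (π / a ^ (3 / 2 : ℝ))).indicator
        (fun s => Real.exp (-(B * s ^ 2 / (1 + a * s ^ 2)))) s)
      (𝓝[>] 0) (𝓝 (√(π / B))) := by
  rw [← integral_gaussian B]
  have hlt : ∀ᶠ a : ℝ in 𝓝[>] 0, 0 < a ∧ a < 1 :=
    Ioo_mem_nhdsGT (by norm_num : (0 : ℝ) < 1)
  apply tendsto_integral_filter_of_dominated_convergence
    (fun s => Real.exp (-(B / 2) * s ^ 2) + (96 * π ^ 2 / B ^ 3) * (1 + s ^ 2)⁻¹)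
  · refine Eventually.of_forall fun a => ?_
    apply Measurable.aestronglyMeasurable
    exact Measurable.indicator (by fun_prop) measurableSet_Ioc
  · filter_upwards [hlt] with a ha
    refine Eventually.of_forall fun s => ?_
    have hnn : 0 ≤ Real.exp (-(B / 2) * s ^ 2) + (96 * π ^ 2 / B ^ 3) * (1 + s ^ 2)⁻¹ := by
      positivity
    by_cases hs : s ∈ Set.Ioc (-π / a ^ (3 / 2 : ℝ)) (π / a ^ (3 / 2 : ℝ))
    · rw [Set.indicator_of_mem hs, Real.norm_of_nonneg (Real.exp_pos _).le]
      apply spia_bound B hB a s ha.1 ha.2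
      have hc : 0 < a ^ (3 / 2 : ℝ) := Real.rpow_pos_of_pos ha.1 _
      have hc2 : (a ^ (3 / 2 : ℝ)) ^ 2 = a ^ 3 := by
        rw [← Real.rpow_natCast, ← Real.rpow_mul ha.1.le, ← Real.rpow_natCast]; norm_num
      rw [← hc2, ← mul_pow]
      have h1 := (div_lt_iff₀ hc).mp hs.1
      have h2 := (le_div_iff₀ hc).mp hs.2
      apply sq_le_sq' <;> linarith
    · rw [Set.indicator_of_notMem hs, norm_zero]; exact hnn
  · exact (integrable_exp_neg_mul_sq (by positivity)).add (integrable_inv_one_add_sq.const_mul _)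
  · refine Eventually.of_forall fun s => ?_
    have hc0 : Tendsto (fun a : ℝ => a ^ (3 / 2 : ℝ) * |s|) (𝓝[>] 0) (𝓝 0) := by
      have : ContinuousAt (fun a : ℝ => a ^ (3 / 2 : ℝ) * |s|) 0 :=
        (Real.continuousAt_rpow_const _ _ (Or.inr (by norm_num))).mul continuousAt_const
      have h := this.tendsto
      rw [Real.zero_rpow (by norm_num), zero_mul] at h
      exact h.mono_left nhdsWithin_le_nhds
    have hev := hc0.eventually (gt_mem_nhds pi_pos)
    have hl : Tendsto (fun a : ℝ => Real.exp (-(B * s ^ 2 / (1 + a * s ^ 2)))) (𝓝[>] 0)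
        (𝓝 (Real.exp (-B * s ^ 2))) := by
      have : ContinuousAt (fun a : ℝ => Real.exp (-(B * s ^ 2 / (1 + a * s ^ 2)))) 0 := by
        have : (1 + 0 * s ^ 2) ≠ 0 := by norm_num
        fun_prop (disch := assumption)
      have h := this.tendsto
      simp only [zero_mul, add_zero, div_one, ← neg_mul] at h
      simp only [neg_mul] at h ⊢
      exact h.mono_left nhdsWithin_le_nhds
    refine hl.congr' ?_
    filter_upwards [hlt, hev] with a ha h
    have hc : 0 < a ^ (3 / 2 : ℝ) := Real.rpow_pos_of_pos ha.1 _
    rw [Set.indicator_of_mem]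
    have h1 := neg_abs_le s
    have h2 := le_abs_self s
    constructor
    · rw [div_lt_iff₀ hc]; nlinarith
    · rw [le_div_iff₀ hc]; nlinarith

/-- Saddle-point asymptotics: as `α → 0⁺`,
`∫_{-π}^{π} (dt/2π) e^(4π²Aα/(α²+t²)) ∼ (α^(3/2)/(4π^(3/2)√A)) e^(4π²A/α)`. -/
theorem saddle_point_integral_asymptotics (A : ℝ) (hA : 0 < A) :
    Tendsto
      (fun α : ℝ =>
        4 * π ^ ((3 / 2 : ℝ)) * Real.sqrt A * α ^ (-(3 / 2 : ℝ)) *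
          Real.exp (-(4 * π ^ 2 * A) / α) *
          ∫ t in (-π)..π, (1 / (2 * π)) * Real.exp (4 * π ^ 2 * A * α / (α ^ 2 + t ^ 2)))
      (𝓝[>] 0) (𝓝 1) := by
  have hB : 0 < 4 * π ^ 2 * A := by positivity
  have key := (spia_lim (4 * π ^ 2 * A) hB).const_mul (2 * √π * √A)
  have hone : 2 * √π * √A * √(π / (4 * π ^ 2 * A)) = 1 := by
    have h1 : π / (4 * π ^ 2 * A) = (1 / (2 * √π * √A)) ^ 2 := by
      rw [div_pow, mul_pow, mul_pow, Real.sq_sqrt pi_pos.le, Real.sq_sqrt hA.le]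
      field_simp
      norm_num
    rw [h1, Real.sqrt_sq (by positivity)]
    have := Real.sqrt_pos.mpr pi_pos
    have := Real.sqrt_pos.mpr hA
    field_simp
  rw [hone] at key
  refine key.congr' ?_
  filter_upwards [self_mem_nhdsWithin] with a ha
  have ha : 0 < a := ha
  have hc : 0 < a ^ (3 / 2 : ℝ) := Real.rpow_pos_of_pos ha _
  have hc2 : (a ^ (3 / 2 : ℝ)) ^ 2 = a ^ 3 := by
    rw [← Real.rpow_natCast, ← Real.rpow_mul ha.le, ← Real.rpow_natCast]; norm_num
  have hpi : π ^ (3 / 2 : ℝ) = π * √π := by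
    rw [Real.sqrt_eq_rpow, ← Real.rpow_one_add' pi_pos.le (by norm_num)]; norm_num
  rw [Real.rpow_neg ha.le, hpi]
  set c := a ^ (3 / 2 : ℝ) with hcdef
  have hle : -π / c ≤ π / c := by
    apply div_le_div_of_nonneg_right _ hc.le
    linarith [pi_pos]
  rw [integral_indicator measurableSet_Ioc, ← intervalIntegral.integral_of_le hle]
  have hsub := intervalIntegral.mul_integral_comp_mul_left (a := -π / c) (b := π / c)
    (f := fun t => (1 / (2 * π)) * Real.exp (4 * π ^ 2 * A * a / (a ^ 2 + t ^ 2))) c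
  rw [mul_div_cancel₀ _ hc.ne', mul_div_cancel₀ _ hc.ne'] at hsub
  rw [← hsub]
  have hint : ∀ s : ℝ, (1 / (2 * π)) *
      Real.exp (4 * π ^ 2 * A * a / (a ^ 2 + (c * s) ^ 2)) =
      (1 / (2 * π) * Real.exp (4 * π ^ 2 * A / a)) *
        Real.exp (-(4 * π ^ 2 * A * s ^ 2 / (1 + a * s ^ 2))) := by
    intro s
    rw [mul_assoc (1 / (2 * π)), ← Real.exp_add, mul_pow, hc2]
    congr 2
    have h1 : 1 + a * s ^ 2 ≠ 0 := by positivity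
    have h2 : a ^ 2 + a ^ 3 * s ^ 2 = a ^ 2 * (1 + a * s ^ 2) := by ring
    rw [h2]
    field_simp
    ring
  simp only [hint]
  rw [intervalIntegral.integral_const_mul]
  generalize (∫ s in (-π / c)..(π / c),
    Real.exp (-(4 * π ^ 2 * A * s ^ 2 / (1 + a * s ^ 2)))) = J
  rw [neg_div, Real.exp_neg]
  have := Real.exp_pos (4 * π ^ 2 * A / a)
  generalize Real.exp (4 * π ^ 2 * A / a) = E at *
  have hp := pi_pos
  field_simp
  ring
end
end
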